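/- arXiv:1611.10315 — 2 statements merged into one kernel-verified Lean document; each statement's English description precedes it below -/
import Mathlib

section
/- For every integer h ≥ 3 there exist ε₀ = ε₀(h) > 0 and c = c(h) > 0 such that the following holds for every ε ∈ (0, ε₀) and every non-bipartite graph H on h vertices: there is n₀ = n₀(ε) such that for every n ≥ n₀ there exists a graph G on n vertices which is ε-far from being induced H-free and yet contains at most ε^{c·log(1/ε)}·n^h (not necessarily induced) copies of H. -/
open scoped Classical
open Finset

noncomputable section

/-- Number of unordered vertex pairs on which two graphs on the same vertex set differ. -/
def editDist {n : ℕ} (G H : SimpleGraph (Fin n)) : ℕ :=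
  Set.ncard {e : Sym2 (Fin n) | (e ∈ G.edgeSet ∧ e ∉ H.edgeSet) ∨ (e ∉ G.edgeSet ∧ e ∈ H.edgeSet)}

/-- `G` is `ε`-far from satisfying the graph property `P`. -/
def Far (P : ∀ n : ℕ, Set (SimpleGraph (Fin n))) {n : ℕ} (G : SimpleGraph (Fin n)) (ε : ℝ) : Prop :=
  ∀ H : SimpleGraph (Fin n), H ∈ P n → ε * (n : ℝ) ^ 2 ≤ (editDist G H : ℝ)

/-- The subgraph induced by a vertex subset `Q` of size `m`, as a graph on `Fin m`. -/
def inducedOn {n : ℕ} (G : SimpleGraph (Fin n)) {m : ℕ} (Q : Finset (Fin n))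
    (h : Q.card = m) : SimpleGraph (Fin m) :=
  G.comap fun i => ((Q.orderIsoOfFin h) i : Fin n)

/-- A graph property is easily testable if for some constant `c > 0`, for every `ε ∈ (0,1/2)`
and every graph on at least `ε ^ (-c)` vertices which is `ε`-far from `P`, at least a
`2/3`-fraction of the `⌈ε ^ (-c)⌉`-element vertex subsets induce a subgraph not satisfying `P`. -/
def EasilyTestable (P : ∀ n : ℕ, Set (SimpleGraph (Fin n))) : Prop :=
  ∃ c : ℝ, 0 < c ∧ ∀ ε : ℝ, 0 < ε → ε < 1 / 2 → ∀ n : ℕ, ∀ G : SimpleGraph (Fin n),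
    ε ^ (-c) ≤ (n : ℝ) → Far P G ε →
    (2 / 3 : ℝ) * (((Finset.univ : Finset (Fin n)).powersetCard ⌈ε ^ (-c)⌉₊).card : ℝ) ≤
      ((((Finset.univ : Finset (Fin n)).powersetCard ⌈ε ^ (-c)⌉₊).filter
        fun Q => ∃ h : Q.card = ⌈ε ^ (-c)⌉₊, inducedOn G Q h ∉ P ⌈ε ^ (-c)⌉₊).card : ℝ)

/-- The property of being induced `𝓕`-free. -/
def InducedFree (𝓕 : Set (Σ k : ℕ, SimpleGraph (Fin k))) : ∀ n : ℕ, Set (SimpleGraph (Fin n)) :=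
  fun n => {G | ∀ p ∈ 𝓕, IsEmpty (p.2 ↪g G)}

/-- A graph is bipartite: its vertex set can be partitioned into two independent sets. -/
def IsBipGraph {V : Type*} (H : SimpleGraph V) : Prop :=
  ∃ A : Set V, (∀ u ∈ A, ∀ v ∈ A, ¬ H.Adj u v) ∧ (∀ u ∉ A, ∀ v ∉ A, ¬ H.Adj u v)

/-- A graph is co-bipartite: its vertex set can be partitioned into two cliques. -/
def IsCoBipGraph {V : Type*} (H : SimpleGraph V) : Prop :=
  ∃ A : Set V, (∀ u ∈ A, ∀ v ∈ A, u ≠ v → H.Adj u v) ∧ (∀ u ∉ A, ∀ v ∉ A, u ≠ v → H.Adj u v)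

/-- A graph is split: its vertex set can be partitioned into a clique and an independent set. -/
def IsSplitGraph {V : Type*} (H : SimpleGraph V) : Prop :=
  ∃ A : Set V, (∀ u ∈ A, ∀ v ∈ A, u ≠ v → H.Adj u v) ∧ (∀ u ∉ A, ∀ v ∉ A, ¬ H.Adj u v)

/-- The number of (not necessarily induced) copies of `H` in `G`, i.e. the number of
subgraphs of `G` isomorphic to `H`. -/
def copyCount {h n : ℕ} (H : SimpleGraph (Fin h)) (G : SimpleGraph (Fin n)) : ℕ :=
  Set.ncard {K : G.Subgraph | Nonempty (H ≃g K.coe)}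

/-!
A minimal induced subgraph of `H` to which `H` admits a homomorphism (the core of `H`) is not
bipartite, hence contains a cycle, and all its endomorphisms are automorphisms. One can therefore
label the vertices of `H` by natural numbers `a i` so that every endomorphism of `H` carries some
cycle onto this one, with labels increasing along it.

Let `S` be a large set of natural numbers below `m` without nontrivial averages of boundedly many
elements (Behrend). Place a copy `i ↦ (i, x + a i * s)` of `H` for each `x` and each `s ∈ S`; two
such copies share at most one vertex, as two points determine a line, and so do the copies in a
suitable packing of a blow-up, which is why it is far from induced `H`-free. Conversely, compose a
copy of `H` in the blow-up with the projection to `H` and take a cycle with increasing labels: the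
slope of its closing edge is an average of the slopes of its other edges, so all these slopes agree
and three of its vertices are collinear. Two of them determine the third up to a proportion `1 / m`
of the vertices, which bounds the number of copies by `O(n ^ h / m)`, with `m` quasipolynomial in
`1 / ε`.
-/

/-! ### Average-free sets -/

/-- `S` is *`A`-average-free* if no element of `S` is the average of at most `A` elements of `S`,
counted with multiplicity, unless these are all equal to it. -/
def AverageFree {E : Type*} [AddCommMonoid E] (A : ℕ) (S : Set E) : Prop :=
  ∀ t : Multiset E, t.card ≤ A → (∀ x ∈ t, x ∈ S) → ∀ y ∈ S, t.sum = t.card • y → ∀ x ∈ t, x = y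

namespace AverageFree

variable {E F : Type*} [AddCommMonoid E] [AddCommMonoid F] {A : ℕ} {S : Set E} {T : Set F}

lemma of_mapsTo (hT : AverageFree A T) (f : E →+ F) (hST : Set.MapsTo f S T)
    (hf : Set.InjOn f S) : AverageFree A S := by
  intro t ht htS y hy hsum x hx
  refine hf (htS x hx) hy (hT (t.map f) (by simpa using ht) ?_ (f y) (hST hy) ?_ (f x)
    (Multiset.mem_map_of_mem f hx))
  · simpa using fun z hz => hST (htS z hz)
  · rw [← map_multiset_sum, hsum, map_nsmul, Multiset.card_map]

lemma image (hS : AverageFree A S) (f : E →+ F) {B : Set E} (hf : Set.InjOn f B)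
    (hB : ∀ t : Multiset E, t.card ≤ A → (∀ x ∈ t, x ∈ S) → t.sum ∈ B) :
    AverageFree A (f '' S) := by
  rintro t ht htS' _ ⟨y, hy, rfl⟩ hsum
  obtain ⟨t, htS, rfl⟩ : ∃ t' : Multiset E, (∀ x ∈ t', x ∈ S) ∧ t'.map f = t := by
    choose! g hgS hg using htS'
    exact ⟨t.map g, by simpa using hgS, by simpa using Multiset.map_congr rfl hg⟩
  rw [Multiset.card_map] at ht hsum
  have hsum' : t.sum = t.card • y := by
    refine hf (hB t ht htS) ?_ ?_
    · rw [← Multiset.sum_replicate]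
      exact hB _ (by simpa using ht) fun x hx => Multiset.eq_of_mem_replicate hx ▸ hy
    · rw [map_multiset_sum, hsum, map_nsmul]
  simpa using fun x hx => congrArg f (hS t ht htS y hy hsum' x hx)

/-- The slopes `s t`, weighted by the increments of `b`, have average `s₀`. -/
lemma eq_of_chord {S : Set ℕ} (hS : AverageFree A S) {l : ℕ} {b u x s : ℕ → ℕ} {x₀ s₀ : ℕ}
    (hb : ∀ t < l, b t < b (t + 1)) (hA : b l ≤ A) (hs : ∀ t < l, s t ∈ S) (hs₀ : s₀ ∈ S)
    (hu : ∀ t < l, u t = x t + b t * s t) (hu' : ∀ t < l, u (t + 1) = x t + b (t + 1) * s t)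
    (h₀ : u 0 = x₀ + b 0 * s₀) (hl : u l = x₀ + b l * s₀) :
    ∀ t < l, s t = s₀ := by
  have hb_sum : ∀ k ≤ l, b 0 + ∑ t ∈ range k, (b (t + 1) - b t) = b k := by
    intro k hk
    induction k with
    | zero => simp
    | succ k ih => grind [Finset.sum_range_succ]
  have hu_step : ∀ t < l, u (t + 1) = u t + (b (t + 1) - b t) * s t := by
    intro t ht
    rw [hu t ht, hu' t ht, add_assoc, ← add_mul, Nat.add_sub_cancel' (hb t ht).le]
  have hu_sum : ∀ k ≤ l, u 0 + ∑ t ∈ range k, (b (t + 1) - b t) * s t = u k := by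
    intro k hk
    induction k with
    | zero => simp
    | succ k ih => rw [Finset.sum_range_succ, ← add_assoc, ih (by lia), hu_step k hk]
  set slopes : Multiset ℕ := ∑ t ∈ range l, Multiset.replicate (b (t + 1) - b t) (s t)
  have hcard : slopes.card = ∑ t ∈ range l, (b (t + 1) - b t) := by simp [slopes]
  have hsum : slopes.sum = slopes.card • s₀ := by
    have h := hu_sum l le_rfl
    rw [hl, h₀, ← hb_sum l le_rfl, ← hcard] at h
    simp only [slopes, Multiset.sum_sum, Multiset.sum_replicate, smul_eq_mul] at h ⊢
    linarith
  have hmem : ∀ z, z ∈ slopes ↔ ∃ t < l, b (t + 1) - b t ≠ 0 ∧ z = s t := by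
    simp [slopes, Multiset.mem_sum, Multiset.mem_replicate]
  refine fun t ht => hS slopes (by have := hb_sum l le_rfl; lia) ?_ s₀ hs₀ hsum (s t)
    ((hmem _).2 ⟨t, ht, by have := hb t ht; lia, rfl⟩)
  rintro z hz
  obtain ⟨t, ht, -, rfl⟩ := (hmem z).1 hz
  exact hs t ht

lemma collinear_of_chord {S : Set ℕ} (hS : AverageFree A S) {l : ℕ} {b u : ℕ → ℕ} {x₀ s₀ : ℕ}
    (hb : ∀ t < l, b t < b (t + 1)) (hA : b l ≤ A)
    (hu : ∀ t < l, ∃ x, ∃ s ∈ S, u t = x + b t * s ∧ u (t + 1) = x + b (t + 1) * s)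
    (hs₀ : s₀ ∈ S) (h₀ : u 0 = x₀ + b 0 * s₀) (hl : u l = x₀ + b l * s₀) :
    ∀ t ≤ l, u t = x₀ + b t * s₀ := by
  choose! x s hs hu hu' using hu
  have hslope := hS.eq_of_chord hb hA hs hs₀ hu hu' h₀ hl
  intro t ht
  induction t with
  | zero => exact h₀
  | succ t ih =>
    have ht' : t < l := ht
    have hx : x t = x₀ := by
      have := (hu t ht').symm.trans (ih ht'.le)
      rw [hslope t ht'] at this
      exact Nat.add_right_cancel this
    rw [hu' t ht', hx, hslope t ht']

end AverageFree

lemma averageFree_sphere {E : Type*} [NormedAddCommGroup E] [InnerProductSpace ℝ E] (A : ℕ)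
    (c : E) (r : ℝ) : AverageFree A (Metric.sphere c r) := by
  intro t _ ht y hy hsum x hx
  have norm_sub_sq_eq : ∀ z ∈ t, ‖z - y‖ ^ 2 = 2 * inner ℝ (y - c) (y - z) := by
    intro z hz
    have hzy : ‖z - c‖ = ‖y - c‖ := by
      rw [mem_sphere_iff_norm.1 (ht z hz), mem_sphere_iff_norm.1 hy]
    have hinner : inner ℝ (y - c) (y - z) = ‖y - c‖ ^ 2 - inner ℝ (z - c) (y - c) := by
      rw [← real_inner_self_eq_norm_sq, ← inner_sub_left, sub_sub_sub_cancel_right,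
        real_inner_comm]
    rw [hinner, ← sub_sub_sub_cancel_right z y c, norm_sub_sq_real, hzy]
    ring
  have sum_sub : (t.map fun z => y - z).sum = 0 := by
    rw [Multiset.sum_map_sub]
    simp [hsum]
  have sum_inner : (t.map fun z => inner ℝ (y - c) (y - z)).sum = 0 := by
    have h := map_multiset_sum (innerₗ E (y - c)) (t.map fun z => y - z)
    rw [sum_sub, map_zero, Multiset.map_map] at h
    exact h.symm
  have sum_sq : (t.map fun z => ‖z - y‖ ^ 2).sum = 0 := by
    rw [Multiset.map_congr rfl norm_sub_sq_eq, Multiset.sum_map_mul_left, sum_inner, mul_zero]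
  have hle := Multiset.single_le_sum (by simp) _
    (Multiset.mem_map_of_mem (fun z => ‖z - y‖ ^ 2) hx)
  rw [sum_sq] at hle
  have : ‖x - y‖ = 0 := by
    have := norm_nonneg (x - y)
    nlinarith
  exact sub_eq_zero.1 (norm_eq_zero.1 this)

lemma averageFree_behrend_sphere (A n d k : ℕ) :
    AverageFree A (Behrend.sphere n d k : Set (Fin n → ℕ)) := by
  let f : (Fin n → ℕ) →+ EuclideanSpace ℝ (Fin n) :=
    { toFun := fun x => WithLp.toLp 2 ((↑) ∘ x : Fin n → ℝ)
      map_zero' := by ext i; simp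
      map_add' := fun x y => by ext i; simp }
  refine (averageFree_sphere A 0 √k).of_mapsTo f Behrend.sphere_subset_preimage_metric_sphere ?_
  intro x _ y _ hxy
  ext i
  simpa [f] using congrArg (fun z : EuclideanSpace ℝ (Fin n) => z i) hxy

lemma behrend_map_lt {n D : ℕ} {x : Fin n → ℕ} (hx : ∀ i, x i < D) : Behrend.map D x < D ^ n := by
  have h := (finFunctionFinEquiv fun i => (⟨x i, hx i⟩ : Fin D)).2
  rwa [finFunctionFinEquiv_apply] at h

/-- In base `A * d`, vectors with entries below `d` are added `A` at a time without carries. -/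
lemma exists_averageFree_card_ge {A d : ℕ} (hA : 0 < A) (hd : 0 < d) (n : ℕ) :
    ∃ S : Finset ℕ, (∀ s ∈ S, s < (A * d) ^ n) ∧ AverageFree A (S : Set ℕ) ∧
      ((d ^ n : ℕ) : ℝ) / ((n * d ^ 2 : ℕ) : ℝ) ≤ #S := by
  obtain ⟨k, hk⟩ := Behrend.exists_large_sphere n d
  have lt_d : ∀ x ∈ Behrend.sphere n d k, ∀ i, x i < d := fun x hx =>
    Behrend.mem_box.1 (Behrend.sphere_subset_box hx)
  have lt_Ad : ∀ x ∈ Behrend.sphere n d k, ∀ i, x i < A * d := fun x hx i =>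
    (lt_d x hx i).trans_le (Nat.le_mul_of_pos_left d hA)
  refine ⟨(Behrend.sphere n d k).image (Behrend.map (A * d)), ?_, ?_, ?_⟩
  · simpa using fun x hx => behrend_map_lt (lt_Ad x hx)
  · rw [coe_image]
    refine (averageFree_behrend_sphere A n d k).image _ Behrend.map_injOn fun t ht htS i => ?_
    have hi : t.sum i = (t.map fun x => x i).sum := map_multiset_sum (Pi.evalAddMonoidHom _ i) t
    calc t.sum i ≤ t.card * (d - 1) := by
          rw [hi, ← smul_eq_mul, ← Multiset.card_map (fun x => x i) t]
          refine Multiset.sum_le_card_nsmul _ _ ?_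
          simpa using fun x hx => Nat.le_sub_one_of_lt (lt_d x (htS x hx) i)
      _ ≤ A * (d - 1) := Nat.mul_le_mul_right _ ht
      _ < A * d := Nat.mul_lt_mul_of_pos_left (Nat.sub_one_lt_of_lt hd) hA
  · rwa [card_image_of_injOn (Behrend.map_injOn.mono lt_Ad)]

lemma inv_pow_sq_le_rpow_log {A ε : ℝ} (hA : 1 < A) (hε : 0 < ε) (hε1 : ε ≤ 1) {b k : ℕ}
    (hb : 0 < b) (hεA : 1 / ε ≤ A ^ (b * k)) :
    (A ^ k ^ 2)⁻¹ ≤ ε ^ (1 / (b ^ 2 * Real.log A) * Real.log (1 / ε)) := by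
  have hlogA : 0 < Real.log A := Real.log_pos hA
  have hlog : Real.log (1 / ε) ≤ b * k * Real.log A := by
    simpa using Real.log_le_log (by positivity) hεA
  have hlog0 : 0 ≤ Real.log (1 / ε) := Real.log_nonneg (by rw [le_div_iff₀ hε]; linarith)
  have hlog_sq : Real.log (1 / ε) ^ 2 / (b ^ 2 * Real.log A) ≤ k ^ 2 * Real.log A := by
    rw [div_le_iff₀ (by positivity)]
    calc Real.log (1 / ε) ^ 2 ≤ (b * k * Real.log A) ^ 2 := by gcongr
      _ = _ := by ring
  rw [← Real.exp_log (show 0 < (A ^ k ^ 2)⁻¹ by positivity), Real.rpow_def_of_pos hε,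
    Real.exp_le_exp, Real.log_inv, Real.log_pow, ← neg_neg (Real.log ε), ← Real.log_inv,
    ← one_div]
  push_cast
  calc -(k ^ 2 * Real.log A) ≤ -(Real.log (1 / ε) ^ 2 / (b ^ 2 * Real.log A)) :=
        neg_le_neg hlog_sq
    _ = _ := by ring

lemma exists_pow_exponent {A : ℕ} (hA : 2 ≤ A) (C D : ℝ) :
    ∃ ε₀ c : ℝ, 0 < ε₀ ∧ 0 < c ∧ ∀ ε : ℝ, 0 < ε → ε < ε₀ → ∃ k : ℕ, 0 < k ∧
      C * ε * (k * (A : ℝ) ^ (3 * k)) ≤ 1 ∧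
      D / (A : ℝ) ^ (k * (k + 1)) ≤ ε ^ (c * Real.log (1 / ε)) := by
  have hA1 : (1 : ℝ) < A := by exact_mod_cast hA
  obtain ⟨K, hK⟩ := pow_unbounded_of_one_lt (max C D) hA1
  refine ⟨1 / ((A : ℝ) ^ 5) ^ (K + 1), 1 / ((10 : ℕ) ^ 2 * Real.log A), by positivity,
    by have := Real.log_pos hA1; positivity, fun ε hε hεlt => ?_⟩
  have hεinv : ((A : ℝ) ^ 5) ^ (K + 1) < 1 / ε := by rwa [lt_one_div (by positivity) hε]
  have hεinv1 : 1 < 1 / ε := (one_le_pow₀ (one_le_pow₀ hA1.le)).trans_lt hεinv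
  obtain ⟨k, hkε, hεk⟩ := exists_nat_pow_near hεinv1.le (one_lt_pow₀ hA1 (by norm_num : 5 ≠ 0))
  have hKk : K < k := Nat.lt_of_succ_lt_succ
    ((pow_lt_pow_iff_right₀ (one_lt_pow₀ hA1 (by norm_num))).1 (hεinv.trans hεk))
  -- The exponent `5 = 1 + 1 + 3` absorbs `C`, `k` and `A ^ (3 * k)`.
  have hCDk : max C D ≤ (A : ℝ) ^ k := hK.le.trans (pow_le_pow_right₀ hA1.le hKk.le)
  refine ⟨k, by lia, ?_, ?_⟩
  · have hkA : (k : ℝ) ≤ (A : ℝ) ^ k := by exact_mod_cast (Nat.lt_pow_self hA).le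
    calc C * ε * (k * (A : ℝ) ^ (3 * k))
        ≤ (A : ℝ) ^ k * ε * ((A : ℝ) ^ k * (A : ℝ) ^ (3 * k)) := by
          gcongr
          exact (le_max_left C D).trans hCDk
      _ = ε * ((A : ℝ) ^ 5) ^ k := by ring
      _ ≤ ε * (1 / ε) := by gcongr
      _ = 1 := mul_one_div_cancel hε.ne'
  · calc D / (A : ℝ) ^ (k * (k + 1)) ≤ (A : ℝ) ^ k / (A : ℝ) ^ (k * (k + 1)) := by
          gcongr
          exact (le_max_right C D).trans hCDk
      _ = ((A : ℝ) ^ k ^ 2)⁻¹ := by field_simp; ring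
      _ ≤ _ := by
          refine inv_pow_sq_le_rpow_log hA1 hε ?_ (by norm_num) (hεk.le.trans ?_)
          · rw [lt_div_iff₀ hε] at hεinv1
            linarith
          · rw [← pow_mul]
            exact pow_le_pow_right₀ hA1.le (by lia)

lemma exists_dense_averageFree {A : ℕ} (hA : 2 ≤ A) (C D : ℝ) :
    ∃ ε₀ c : ℝ, 0 < ε₀ ∧ 0 < c ∧ ∀ ε : ℝ, 0 < ε → ε < ε₀ → ∃ (m : ℕ) (S : Finset ℕ),
      0 < m ∧ (∀ s ∈ S, s < m) ∧ AverageFree A (S : Set ℕ) ∧ C * ε * m ≤ #S ∧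
      D / m ≤ ε ^ (c * Real.log (1 / ε)) := by
  obtain ⟨ε₀, c, hε₀, hc, h⟩ := exists_pow_exponent hA C D
  refine ⟨ε₀, c, hε₀, hc, fun ε hε hεlt => ?_⟩
  obtain ⟨k, hk, hCk, hDk⟩ := h ε hε hεlt
  obtain ⟨S, hSm, hS, hScard⟩ :=
    exists_averageFree_card_ge (A := A) (d := A ^ k) (by lia) (by positivity) k
  refine ⟨(A * A ^ k) ^ k, S, by positivity, hSm, hS, hScard.trans' ?_, ?_⟩
  · push_cast
    rw [le_div_iff₀ (by positivity)]
    calc C * ε * (A * (A : ℝ) ^ k) ^ k * (k * ((A : ℝ) ^ k) ^ 2)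
        = C * ε * (k * (A : ℝ) ^ (3 * k)) * ((A : ℝ) ^ k) ^ k := by ring
      _ ≤ 1 * ((A : ℝ) ^ k) ^ k := by gcongr
      _ = ((A : ℝ) ^ k) ^ k := one_mul _
  · convert hDk using 2
    push_cast
    ring

/-! ### Cycles in cores -/

lemma isBipGraph_of_isBipartite {V : Type*} {H : SimpleGraph V} (hH : H.IsBipartite) :
    IsBipGraph H := by
  obtain ⟨C⟩ := hH
  refine ⟨{v | C v = 0}, fun u hu v hv huv => C.valid huv ?_, fun u hu v hv huv => C.valid huv ?_⟩
  · rw [hu, hv]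
  · rw [Fin.eq_one_of_ne_zero _ hu, Fin.eq_one_of_ne_zero _ hv]

lemma exists_core {V : Type*} [Finite V] (H : SimpleGraph V) :
    ∃ s : Set V, Nonempty (H →g H.induce s) ∧
      ∀ f : H.induce s →g H.induce s, Function.Injective f := by
  obtain ⟨s, ⟨r⟩, hmin⟩ := exists_minimal_of_wellFoundedLT
    (fun s : Set V => Nonempty (H →g H.induce s))
    ⟨Set.univ, ⟨H.induceUnivIso.symm.toHom⟩⟩
  refine ⟨s, ⟨r⟩, fun f => Finite.injective_iff_surjective.2 fun y => ?_⟩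
  let image : Set V := Set.range fun x => (f x : V)
  have image_subset : image ≤ s := by
    rintro _ ⟨x, rfl⟩
    exact (f x).2
  have toImage : H →g H.induce image :=
    { toFun := fun v => ⟨f (r v), Set.mem_range_self (r v)⟩
      map_rel' := fun h => f.map_rel (r.map_rel h) }
  obtain ⟨x, hx⟩ := hmin ⟨toImage⟩ image_subset y.2
  exact ⟨x, Subtype.ext hx⟩

lemma exists_rightInverse_hom {V : Type*} [Finite V] {K : SimpleGraph V} (f : K →g K)
    (hf : Function.Injective f) : ∃ g : K →g K, Function.RightInverse g f := by
  have := Fintype.ofFinite V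
  have coe_pow : ∀ k : ℕ, ⇑(f ^ k) = f^[k] :=
    hom_coe_pow (fun g : K →g K => (g : V → V)) rfl (fun _ _ => rfl) f
  have pow_eq_one : f ^ (Fintype.card V).factorial = 1 :=
    DFunLike.coe_injective <| (coe_pow _).trans <|
      Function.injective_iff_iterate_factorial_card_eq_id.1 hf
  exact ⟨f ^ ((Fintype.card V).factorial - 1),
    DFunLike.congr_fun ((mul_pow_sub_one (Nat.factorial_ne_zero _) f).trans pow_eq_one)⟩

lemma injective_getVert_of_isCycle {V : Type*} {K : SimpleGraph V} {v : V} {c : K.Walk v v}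
    (hc : c.IsCycle) : Function.Injective fun t : Fin c.length => c.getVert t := by
  intro t t' h
  refine Fin.ext (hc.getVert_injOn' ?_ ?_ h) <;> exact Nat.le_sub_one_of_lt (Fin.is_lt _)

/-- A labelling `a` of the vertices *has rising cycles* if every endomorphism of `H` maps the
vertices of some cycle, listed in order from some starting point, to vertices with increasing
labels. -/
def HasRisingCycles {V : Type*} (H : SimpleGraph V) (a : V → ℕ) : Prop :=
  ∀ φ : H →g H, ∃ (v : V) (c : H.Walk v v), c.IsCycle ∧
    StrictMonoOn (fun t => a (φ (c.getVert t))) (Set.Iio c.length)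

lemma hasRisingCycles_of_core {V : Type*} [Finite V] {H : SimpleGraph V} {s : Set V}
    (hs : ∀ f : H.induce s →g H.induce s, Function.Injective f) (r : H →g H.induce s) {v : s}
    {c : (H.induce s).Walk v v} (hc : c.IsCycle) {rank : s → Fin c.length}
    (hrank : Function.LeftInverse rank fun t => c.getVert t) {a : V → ℕ}
    (ha : ∀ w w', rank (r w) < rank (r w') → a w < a w') : HasRisingCycles H a := by
  intro φ
  let incl : H.induce s →g H := (SimpleGraph.Embedding.induce s).toHom
  obtain ⟨g, hg⟩ := exists_rightInverse_hom ((r.comp φ).comp incl) (hs _)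
  refine ⟨_, c.map (incl.comp g), hc.map (Subtype.val_injective.comp hg.injective),
    fun t ht t' ht' htt' => ha _ _ ?_⟩
  rw [SimpleGraph.Walk.length_map] at ht ht'
  have rank_eq : ∀ t (ht : t < c.length),
      rank (r (φ ((c.map (incl.comp g)).getVert t))) = ⟨t, ht⟩ := by
    intro t ht
    rw [SimpleGraph.Walk.getVert_map]
    exact (congrArg rank (hg (c.getVert t))).trans (hrank ⟨t, ht⟩)
  rwa [rank_eq t ht, rank_eq t' ht']

lemma exists_hasRisingCycles {V : Type*} [Fintype V] {H : SimpleGraph V} (hH : ¬ IsBipGraph H) :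
    ∃ a : V → ℕ, Function.Injective a ∧ (∀ v, a v < Fintype.card V ^ 2) ∧ HasRisingCycles H a := by
  obtain ⟨s, ⟨r⟩, hs⟩ := exists_core H
  have not_acyclic : ¬ (H.induce s).IsAcyclic := fun h =>
    hH (isBipGraph_of_isBipartite (h.colorable_two.of_hom r))
  obtain ⟨v, c, hc⟩ : ∃ v, ∃ c : (H.induce s).Walk v v, c.IsCycle := by
    simpa [SimpleGraph.IsAcyclic] using not_acyclic
  have hinj := injective_getVert_of_isCycle hc
  have hlen : c.length ≤ Fintype.card V :=
    (Fintype.card_fin _).symm.trans_le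
      (Fintype.card_le_of_injective _ (Subtype.val_injective.comp hinj))
  have : Nonempty (Fin c.length) := ⟨⟨0, by have := hc.three_le_length; lia⟩⟩
  obtain ⟨rank, hrank⟩ := hinj.hasLeftInverse
  let label (w : V) := finProdFinEquiv (rank (r w), Fintype.equivFin V w)
  have label_lt : ∀ w w', rank (r w) < rank (r w') → (label w : ℕ) < label w' := by
    intro w w' h
    have := (Fintype.equivFin V w).2
    have : (rank (r w) : ℕ) + 1 ≤ rank (r w') := h
    simp only [label, finProdFinEquiv_apply_val]
    nlinarith
  refine ⟨fun w => label w, fun w w' h => ?_, fun w => ?_,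
    hasRisingCycles_of_core hs r hc hrank label_lt⟩
  · exact (Fintype.equivFin V).injective (Prod.ext_iff.1 (finProdFinEquiv.injective (Fin.ext h))).2
  · calc (label w : ℕ) < c.length * Fintype.card V := (label w).2
      _ ≤ Fintype.card V ^ 2 := by rw [sq]; gcongr

/-! ### The progression graph -/

section ProgressionGraph

variable {V : Type*} {H : SimpleGraph V} {a : V → ℕ} {S : Finset ℕ} {A : ℕ}

/-- The graph on `V × ℕ` formed by the copies `i ↦ (i, x + a i * s)` of `H` with `x : ℕ` and
`s ∈ S`. For `H` a triangle this is the Ruzsa–Szemerédi graph. -/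
def progressionGraph (H : SimpleGraph V) (a : V → ℕ) (S : Finset ℕ) : SimpleGraph (V × ℕ) where
  Adj p q := H.Adj p.1 q.1 ∧ ∃ x, ∃ s ∈ S, p.2 = x + a p.1 * s ∧ q.2 = x + a q.1 * s
  symm := ⟨fun _ _ ⟨hadj, x, s, hs, hp, hq⟩ => ⟨hadj.symm, x, s, hs, hq, hp⟩⟩
  loopless := ⟨fun _ h => H.irrefl h.1⟩

/-- Three points of `V × ℕ` are collinear if they lie on a line `i ↦ (i, x + a i * s)`. The labels
of the first two are required to be increasing, so that these points determine the line. -/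
def IsCollinearTriple (a : V → ℕ) (p q r : V × ℕ) : Prop :=
  a p.1 < a q.1 ∧ ∃ x s, p.2 = x + a p.1 * s ∧ q.2 = x + a q.1 * s ∧ r.2 = x + a r.1 * s

lemma line_unique {α β x x' s s' : ℕ} (hαβ : α ≠ β) (hα : x + α * s = x' + α * s')
    (hβ : x + β * s = x' + β * s') : x = x' ∧ s = s' := by
  have hs : s = s' := by
    zify at *
    exact mul_left_cancel₀ (sub_ne_zero.2 hαβ) (by linear_combination hα - hβ)
  subst hs
  exact ⟨Nat.add_right_cancel hα, rfl⟩

lemma IsCollinearTriple.eq_of_fst_eq {p q r r' : V × ℕ} (h : IsCollinearTriple a p q r)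
    (h' : IsCollinearTriple a p q r') (hr : r.1 = r'.1) : r = r' := by
  obtain ⟨hpq, x, s, hp, hq, hr₂⟩ := h
  obtain ⟨-, x', s', hp', hq', hr₂'⟩ := h'
  obtain ⟨rfl, rfl⟩ := line_unique hpq.ne (hp.symm.trans hp') (hq.symm.trans hq')
  exact Prod.ext hr (by rw [hr₂, hr₂', hr])

/-- The edge closing a rising cycle is a chord of the path formed by its other edges, so this path
is straight. -/
lemma exists_isCollinearTriple (ha : HasRisingCycles H a) (hA : ∀ v, a v ≤ A)
    (hS : AverageFree A (S : Set ℕ)) (φ : H →g progressionGraph H a S) :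
    ∃ i j k, k ≠ i ∧ k ≠ j ∧ IsCollinearTriple a (φ i) (φ j) (φ k) := by
  let proj : progressionGraph H a S →g H := ⟨Prod.fst, fun h => h.1⟩
  obtain ⟨v, c, hc, hmono⟩ := ha (proj.comp φ)
  have hlen := hc.three_le_length
  obtain ⟨l, hl⟩ : ∃ l, c.length = l + 1 := ⟨c.length - 1, by lia⟩
  let b (t : ℕ) := a (φ (c.getVert t)).1
  have b_lt : ∀ {t t'}, t < t' → t' ≤ l → b t < b t' := fun htt' ht' =>
    hmono (by rw [Set.mem_Iio]; lia) (by rw [Set.mem_Iio]; lia) htt'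
  have b_ne : ∀ {t t'}, b t < b t' → c.getVert t ≠ c.getVert t' := fun hb h =>
    hb.ne (congrArg (fun w => a (φ w).1) h)
  have edge : ∀ t ≤ l, ∃ x, ∃ s ∈ S, (φ (c.getVert t)).2 = x + b t * s ∧
      (φ (c.getVert (t + 1))).2 = x + b (t + 1) * s := fun t ht =>
    (φ.map_adj (c.adj_getVert_succ (by lia))).2
  have hclose : c.getVert (l + 1) = c.getVert 0 := by simp [← hl]
  obtain ⟨x₀, s₀, hs₀, hlast, hfirst⟩ := edge l le_rfl
  simp only [b, hclose] at hfirst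
  have collinear := hS.collinear_of_chord (fun t ht => b_lt t.lt_succ_self ht) (hA _)
    (fun t ht => edge t ht.le) hs₀ hfirst hlast
  exact ⟨c.getVert 0, c.getVert l, c.getVert 1, (b_ne (b_lt zero_lt_one (by lia))).symm,
    b_ne (b_lt (by lia) le_rfl), b_lt (by lia) le_rfl, x₀, s₀, hfirst, hlast,
    collinear 1 (by lia)⟩

end ProgressionGraph

section Counting

variable {V W : Type*} [Fintype V] [Fintype W]

lemma card_le_of_card_update_le {s : Finset (V → W)} {k : V} {N : ℕ}
    (hs : ∀ φ ∈ s, #{w | Function.update φ k w ∈ s} ≤ N) :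
    #s ≤ Fintype.card W ^ (Fintype.card V - 1) * N := by
  let restrict (φ : V → W) (i : {i // i ≠ k}) : W := φ i
  have update_eq : ∀ φ ψ : V → W, restrict ψ = restrict φ → Function.update φ k (ψ k) = ψ := by
    intro φ ψ h
    ext i
    rcases eq_or_ne i k with rfl | hik
    · simp
    · rw [Function.update_of_ne hik]
      exact (congrFun h ⟨i, hik⟩).symm
  have card_fiber : ∀ b ∈ s.image restrict, #{ψ ∈ s | restrict ψ = b} ≤ N := by
    simp only [mem_image, forall_exists_index, and_imp, forall_apply_eq_imp_iff₂]
    refine fun φ hφ => (card_le_card_of_injOn (fun ψ => ψ k) ?_ ?_).trans (hs φ hφ)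
    · intro ψ hψ
      simp only [coe_filter, Set.mem_ofPred_eq, mem_univ, true_and] at hψ ⊢
      rw [update_eq φ ψ hψ.2]
      exact hψ.1
    · intro ψ hψ ψ' hψ' h
      simp only [coe_filter, Set.mem_ofPred_eq] at hψ hψ' h
      rw [← update_eq φ ψ hψ.2, ← update_eq φ ψ' hψ'.2, h]
  calc #s ≤ N * #(s.image restrict) := card_le_mul_card_image s N card_fiber
    _ ≤ N * Fintype.card ({i // i ≠ k} → W) := by gcongr; exact card_le_univ _
    _ = Fintype.card W ^ (Fintype.card V - 1) * N := by
      simp [mul_comm]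

variable {H : SimpleGraph V} {a : V → ℕ} {S : Finset ℕ} {A N : ℕ} {π : W → V × ℕ}

lemma card_isCollinearTriple_le (hπ : ∀ p, #{w | π w = p} ≤ N) (p q : V × ℕ) :
    #{w | IsCollinearTriple a p q (π w)} ≤ Fintype.card V * N := by
  rw [mul_comm]
  refine card_le_mul_card_image_of_maps_to (f := fun w => (π w).1) (t := univ) (by simp) N
    fun v _ => ?_
  rcases eq_empty_or_nonempty {w ∈ {w | IsCollinearTriple a p q (π w)} | (π w).1 = v} with
    h | ⟨w₀, hw₀⟩
  · simp [h]
  · refine (card_le_card fun w hw => ?_).trans (hπ (π w₀))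
    simp only [mem_filter, mem_univ, true_and] at hw hw₀ ⊢
    exact hw.1.eq_of_fst_eq hw₀.1 (hw.2.trans hw₀.2.symm)

lemma labelledCopyCount_comap_progressionGraph_le (ha : HasRisingCycles H a) (hA : ∀ v, a v ≤ A)
    (hS : AverageFree A (S : Set ℕ)) (hπ : ∀ p, #{w | π w = p} ≤ N) :
    ((progressionGraph H a S).comap π).labelledCopyCount H ≤
      Fintype.card V ^ 3 * (Fintype.card W ^ (Fintype.card V - 1) * (Fintype.card V * N)) := by
  let collinearMaps (τ : V × V × V) : Finset (V → W) :=
    {φ | τ.2.2 ≠ τ.1 ∧ τ.2.2 ≠ τ.2.1 ∧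
      IsCollinearTriple a (π (φ τ.1)) (π (φ τ.2.1)) (π (φ τ.2.2))}
  have card_collinearMaps : ∀ τ, #(collinearMaps τ) ≤
      Fintype.card W ^ (Fintype.card V - 1) * (Fintype.card V * N) := by
    rintro ⟨i, j, k⟩
    refine card_le_of_card_update_le (k := k) fun φ hφ => (card_le_card fun w hw => ?_).trans
      (card_isCollinearTriple_le (a := a) hπ (π (φ i)) (π (φ j)))
    simp only [collinearMaps, mem_filter, mem_univ, true_and] at hφ hw ⊢
    simpa [Function.update_of_ne hφ.1.symm, Function.update_of_ne hφ.2.1.symm] using hw.2.2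
  have mem_collinearMaps : ∀ f : SimpleGraph.Copy H ((progressionGraph H a S).comap π),
      ⇑f ∈ univ.biUnion collinearMaps := by
    intro f
    obtain ⟨i, j, k, hki, hkj, h⟩ :=
      exists_isCollinearTriple ha hA hS ((SimpleGraph.Hom.comap π _).comp f.toHom)
    simp only [collinearMaps, mem_biUnion, mem_filter, mem_univ, true_and]
    exact ⟨(i, j, k), hki, hkj, h⟩
  calc ((progressionGraph H a S).comap π).labelledCopyCount H
      ≤ #(univ.biUnion collinearMaps) := by
        rw [SimpleGraph.labelledCopyCount, ← card_univ]
        exact card_le_card_of_injOn (fun f => ⇑f) (fun f _ => mem_collinearMaps f)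
          DFunLike.coe_injective.injOn
    _ ≤ #(univ : Finset (V × V × V)) * _ := card_biUnion_le_card_mul _ _ _ fun τ _ =>
        card_collinearMaps τ
    _ = _ := by
        simp only [card_univ, Fintype.card_prod]
        ring

end Counting

/-! ### Blow-ups of the progression graph -/

lemma copyCount_le_labelledCopyCount {h n : ℕ} (H : SimpleGraph (Fin h))
    (G : SimpleGraph (Fin n)) : copyCount H G ≤ G.labelledCopyCount H := by
  refine le_of_eq_of_le ?_ SimpleGraph.copyCount_le_labelledCopyCount
  rw [copyCount, SimpleGraph.copyCount, Set.ncard_eq_toFinset_card']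
  congr 1
  ext K
  simp

lemma card_le_editDist {V ι : Type*} [Fintype ι] {H : SimpleGraph V} {n : ℕ}
    {G G' : SimpleGraph (Fin n)} (f : ι → H ↪g G)
    (hf : Pairwise fun κ κ' => (Set.range (f κ) ∩ Set.range (f κ')).Subsingleton)
    (hG' : IsEmpty (H ↪g G')) : Fintype.card ι ≤ editDist G G' := by
  have exists_changed_pair : ∀ κ, ∃ i j, i ≠ j ∧
      ¬ (G.Adj (f κ i) (f κ j) ↔ G'.Adj (f κ i) (f κ j)) := by
    intro κ
    by_contra! hunchanged
    refine hG'.elim ⟨(f κ).toEmbedding, @fun i j => ?_⟩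
    rcases eq_or_ne i j with rfl | hij
    · simp
    · exact (hunchanged i j hij).symm.trans (f κ).map_adj_iff
  choose i j hij hchanged using exists_changed_pair
  rw [← Nat.card_eq_fintype_card, ← Set.ncard_univ]
  refine Set.ncard_le_ncard_of_injOn (fun κ => s(f κ (i κ), f κ (j κ))) ?_ ?_ (Set.toFinite _)
  · intro κ _
    simp only [Set.mem_ofPred_eq, SimpleGraph.mem_edgeSet]
    have := hchanged κ
    tauto
  · intro κ _ κ' _ (hpair : s(f κ (i κ), f κ (j κ)) = s(f κ' (i κ'), f κ' (j κ')))
    by_contra hκ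
    have mem_inter : ∀ v ∈ s(f κ (i κ), f κ (j κ)),
        v ∈ Set.range (f κ) ∩ Set.range (f κ') := by
      intro v hv
      refine ⟨?_, ?_⟩
      · rcases Sym2.mem_iff.1 hv with rfl | rfl <;> exact Set.mem_range_self _
      · rcases Sym2.mem_iff.1 (hpair ▸ hv) with rfl | rfl <;> exact Set.mem_range_self _
    exact hij κ ((f κ).injective (hf hκ (mem_inter _ (Sym2.mem_mk_left _ _))
      (mem_inter _ (Sym2.mem_mk_right _ _))))

section BlockCoords

variable (h M : ℕ) [NeZero h] [NeZero M]

/-- The coordinates `((y, i), u)` of the number `(y * h + i) * M + u`: its *level* `y`, its *part*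
`i` and its *position* `u`. -/
def blockCoords : ℕ ≃ (ℕ × Fin h) × Fin M :=
  (Nat.divModEquiv M).trans ((Nat.divModEquiv h).prodCongr (Equiv.refl _))

lemma blockCoords_symm_lt {y Y : ℕ} (hy : y < Y) (i : Fin h) (u : Fin M) :
    (blockCoords h M).symm ((y, i), u) < Y * h * M := by
  change (y * h + i) * M + u < Y * h * M
  have := i.2
  have := u.2
  calc (y * h + i) * M + u < (y * h + i + 1) * M := by lia
    _ ≤ ((y + 1) * h) * M := by gcongr; lia
    _ ≤ Y * h * M := by gcongr; lia

/-- The part of a vertex and its position, that is, the point of `progressionGraph H a S` of which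
it is a copy in `progressionBlowup H a S M n`. -/
def partPosition (v : ℕ) : Fin h × ℕ :=
  ((blockCoords h M v).1.2, (blockCoords h M v).2)

lemma card_partPosition_le (n : ℕ) (p : Fin h × ℕ) :
    #{v : Fin n | partPosition h M v = p} ≤ n / (h * M) + 1 := by
  rw [← card_range (n / (h * M) + 1)]
  refine card_le_card_of_injOn (fun v => (blockCoords h M v).1.1) (fun v _ => ?_) ?_
  · rw [coe_range, Set.mem_Iio, Nat.lt_succ_iff, mul_comm h, ← Nat.div_div_eq_div_mul]
    exact Nat.div_le_div_right (Nat.div_le_div_right v.2.le)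
  · intro v hv w hw hvw
    simp only [coe_filter, mem_univ, true_and, Set.mem_ofPred_eq] at hv hw
    have hpos := Prod.ext_iff.1 (hv.trans hw.symm)
    exact Fin.ext ((blockCoords h M).injective
      (Prod.ext (Prod.ext hvw hpos.1) (Fin.ext hpos.2)))

end BlockCoords

section ProgressionBlowup

variable {h M A m p : ℕ} [NeZero h] [NeZero M] {H : SimpleGraph (Fin h)} {a : Fin h → ℕ}
  {S : Finset ℕ}

/-- The blow-up of `progressionGraph H a S` on `Fin n`: the copies of a point are the vertices
with that part and position, on all levels. -/
def progressionBlowup (H : SimpleGraph (Fin h)) (a : Fin h → ℕ) (S : Finset ℕ) (M n : ℕ)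
    [NeZero M] : SimpleGraph (Fin n) :=
  (progressionGraph H a S).comap fun v => partPosition h M v

lemma copyCount_progressionBlowup_le (ha : HasRisingCycles H a) (hA : ∀ i, a i ≤ A)
    (hS : AverageFree A (S : Set ℕ)) {n : ℕ} (hn : h * M ≤ n) :
    (copyCount H (progressionBlowup H a S M n) : ℝ) ≤ 2 * h ^ 3 / M * (n : ℝ) ^ h := by
  have hcount : copyCount H (progressionBlowup H a S M n) ≤
      h ^ 3 * (n ^ (h - 1) * (h * (n / (h * M) + 1))) := by
    have := labelledCopyCount_comap_progressionGraph_le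
      (π := fun v : Fin n => partPosition h M v) ha hA hS
      fun p => by convert card_partPosition_le h M n p
    simp only [Fintype.card_fin] at this
    exact (copyCount_le_labelledCopyCount _ _).trans this
  have hM : (0 : ℝ) < M := by exact_mod_cast NeZero.pos M
  have hh : (0 : ℝ) < h := by exact_mod_cast NeZero.pos h
  have one_le : (1 : ℝ) ≤ n / (h * M) := by
    rw [one_le_div (by positivity)]
    exact_mod_cast hn
  have hfiber : h * (((n / (h * M) : ℕ) : ℝ) + 1) ≤ 2 * n / M := by
    calc h * (((n / (h * M) : ℕ) : ℝ) + 1) ≤ h * ((n : ℝ) / (h * M) + n / (h * M)) := by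
          gcongr
          exact_mod_cast Nat.cast_div_le (α := ℝ)
      _ = 2 * n / M := by field_simp; ring
  calc (copyCount H (progressionBlowup H a S M n) : ℝ)
      ≤ h ^ 3 * ((n : ℝ) ^ (h - 1) * (h * (((n / (h * M) : ℕ) : ℝ) + 1))) := by
        exact_mod_cast hcount
    _ ≤ h ^ 3 * ((n : ℝ) ^ (h - 1) * (2 * n / M)) := by gcongr
    _ = 2 * h ^ 3 / M * ((n : ℝ) ^ (h - 1) * n) := by ring
    _ = 2 * h ^ 3 / M * (n : ℝ) ^ h := by rw [pow_sub_one_mul (NeZero.ne h)]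

lemma add_mul_lt_mul {x s m α A : ℕ} (hx : x < m) (hs : s ≤ m) (hα : α < A) :
    x + α * s < A * m := by
  calc x + α * s < m + α * m := add_lt_add_of_lt_of_le hx (by gcongr)
    _ = (α + 1) * m := by ring
    _ ≤ A * m := by gcongr; lia

lemma exists_embedding_progressionBlowup {n x s y t Y : ℕ} (hs : s ∈ S)
    (hM : ∀ i, x + a i * s < M) (hY : ∀ i, y + a i * t < Y) (hn : Y * h * M ≤ n) :
    ∃ f : H ↪g progressionBlowup H a S M n, ∀ i,
      blockCoords h M (f i) = ((y + a i * t, i), ⟨x + a i * s, hM i⟩) := by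
  let vertex (i : Fin h) : Fin n :=
    ⟨(blockCoords h M).symm ((y + a i * t, i), ⟨x + a i * s, hM i⟩),
      (blockCoords_symm_lt h M (hY i) _ _).trans_le hn⟩
  have blockCoords_vertex : ∀ i,
      blockCoords h M (vertex i) = ((y + a i * t, i), ⟨x + a i * s, hM i⟩) := fun i =>
    (blockCoords h M).apply_symm_apply _
  have partPosition_vertex : ∀ i, partPosition h M (vertex i) = (i, x + a i * s) := fun i => by
    rw [partPosition, blockCoords_vertex]
  refine ⟨⟨⟨vertex, fun i j hij => ?_⟩, @fun i j => ?_⟩, blockCoords_vertex⟩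
  · simpa [partPosition_vertex] using congrArg (fun v : Fin n => (partPosition h M v).1) hij
  · change (progressionGraph H a S).Adj (partPosition h M (vertex i))
      (partPosition h M (vertex j)) ↔ H.Adj i j
    rw [partPosition_vertex, partPosition_vertex]
    exact ⟨fun hadj => hadj.1, fun hadj => ⟨hadj, x, s, hs, rfl, rfl⟩⟩

lemma le_editDist_progressionBlowup (ha : Function.Injective a) (hA : ∀ i, a i < A)
    (hSm : ∀ s ∈ S, s < m) (hM : A * m ≤ M) {n : ℕ} (hn : A * p * h * M ≤ n)
    {G' : SimpleGraph (Fin n)} (hG' : IsEmpty (H ↪g G')) :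
    m * #S * (p * p) ≤ editDist (progressionBlowup H a S M n) G' := by
  have exists_copy : ∀ κ : (Fin m × S) × (Fin p × Fin p),
      ∃ f : H ↪g progressionBlowup H a S M n, ∀ i, ∃ u : Fin M, (u : ℕ) = κ.1.1 + a i * κ.1.2 ∧
        blockCoords h M (f i) = ((κ.2.1 + a i * κ.2.2, i), u) := fun κ =>
    (exists_embedding_progressionBlowup κ.1.2.2
      (fun i => (add_mul_lt_mul κ.1.1.2 (hSm _ κ.1.2.2).le (hA i)).trans_le hM)
      (fun i => add_mul_lt_mul κ.2.1.2 κ.2.2.2.le (hA i)) hn).imp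
        fun _ hf i => ⟨_, rfl, hf i⟩
  choose copy position hposition hcopy using exists_copy
  have coords_eq : ∀ {κ κ' i i'}, copy κ i = copy κ' i' → i = i' ∧
      (κ.2.1 + a i * κ.2.2 : ℕ) = κ'.2.1 + a i' * κ'.2.2 ∧
      (κ.1.1 + a i * κ.1.2 : ℕ) = κ'.1.1 + a i' * κ'.1.2 := by
    intro κ κ' i i' h
    have := hcopy κ i
    rw [h, hcopy κ' i'] at this
    simp only [Prod.mk.injEq] at this
    exact ⟨this.1.2.symm, this.1.1.symm, by rw [← hposition, ← hposition, this.2]⟩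
  have inter_subsingleton : Pairwise fun κ κ' =>
      (Set.range (copy κ) ∩ Set.range (copy κ')).Subsingleton := by
    rintro κ κ' hκ _ ⟨⟨i, rfl⟩, i', hi⟩ _ ⟨⟨j, rfl⟩, j', hj⟩
    by_contra hij
    obtain ⟨rfl, hi_level, hi_position⟩ := coords_eq hi
    obtain ⟨rfl, hj_level, hj_position⟩ := coords_eq hj
    have haij : a i' ≠ a j' := ha.ne fun h => hij (congrArg (copy κ) h)
    have hx := line_unique haij hi_position hj_position
    have hy := line_unique haij hi_level hj_level
    exact hκ (Prod.ext (Prod.ext (Fin.ext hx.1.symm) (Subtype.ext hx.2.symm))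
      (Prod.ext (Fin.ext hy.1.symm) (Fin.ext hy.2.symm)))
  simpa using card_le_editDist copy inter_subsingleton hG'

lemma far_progressionBlowup (ha : Function.Injective a) (hA : ∀ i, a i < A)
    (hSm : ∀ s ∈ S, s < m) (hM : A * m ≤ M) {n : ℕ} (hn : A * h * M ≤ n) {ε : ℝ} (hε : 0 ≤ ε)
    (hεS : 4 * (A * h * M) ^ 2 * ε ≤ m * #S) :
    Far (InducedFree {⟨h, H⟩}) (progressionBlowup H a S M n) ε := by
  intro G' hG'
  have hQ : 0 < A * h * M :=
    Nat.mul_pos (Nat.mul_pos (pos_of_gt (hA 0)) (NeZero.pos h)) (NeZero.pos M)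
  set p := n / (A * h * M)
  have hnp : (n : ℝ) ≤ 2 * (A * h * M) * p := by
    have hp : 1 ≤ p := (Nat.one_le_div_iff hQ).2 hn
    have hlt : n < A * h * M * (p + 1) := Nat.lt_mul_div_succ n hQ
    have : n ≤ 2 * (A * h * M) * p := by nlinarith
    exact_mod_cast this
  have hpn : A * p * h * M ≤ n :=
    calc A * p * h * M = A * h * M * p := by ring
      _ ≤ n := Nat.mul_div_le _ _
  calc ε * (n : ℝ) ^ 2 ≤ ε * (2 * (A * h * M) * p) ^ 2 := by gcongr
    _ = 4 * (A * h * M) ^ 2 * ε * (p * p) := by ring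
    _ ≤ m * #S * (p * p) := by gcongr
    _ ≤ editDist (progressionBlowup H a S M n) G' := by
        exact_mod_cast le_editDist_progressionBlowup ha hA hSm hM hpn (hG' _ rfl)

end ProgressionBlowup

/-- For every `h ≥ 3` there are `ε₀, c > 0` such that for every `ε ∈ (0, ε₀)`
and every non-bipartite graph `H` on `h` vertices, for all sufficiently large `n` there is a
graph on `n` vertices which is `ε`-far from being induced `H`-free and yet contains at most
`ε ^ (c · log (1/ε)) · n ^ h` (not necessarily induced) copies of `H`. -/
theorem hard_to_test_non_bipartite (h : ℕ) (hh : 3 ≤ h) :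
    ∃ ε₀ c : ℝ, 0 < ε₀ ∧ 0 < c ∧
      ∀ ε : ℝ, 0 < ε → ε < ε₀ →
      ∀ H : SimpleGraph (Fin h), ¬ IsBipGraph H →
      ∃ n₀ : ℕ, ∀ n : ℕ, n₀ ≤ n →
        ∃ G : SimpleGraph (Fin n),
          Far (InducedFree {⟨h, H⟩}) G ε ∧
          (copyCount H G : ℝ) ≤ ε ^ (c * Real.log (1 / ε)) * (n : ℝ) ^ h := by
  have : NeZero h := ⟨by lia⟩
  obtain ⟨ε₀, c, hε₀, hc, hsets⟩ := exists_dense_averageFree (A := h ^ 2) (by nlinarith)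
    (4 * (h ^ 2 * h * h ^ 2) ^ 2) (2 * h)
  refine ⟨ε₀, c, hε₀, hc, fun ε hε hεlt H hH => ?_⟩
  obtain ⟨a, ha, hah, hcycles⟩ := exists_hasRisingCycles hH
  rw [Fintype.card_fin] at hah
  obtain ⟨m, S, hm, hSm, hS, hSε, hmε⟩ := hsets ε hε hεlt
  have : NeZero m := ⟨hm.ne'⟩
  refine ⟨h ^ 2 * h * (h ^ 2 * m), fun n hn =>
    ⟨progressionBlowup H a S (h ^ 2 * m) n, ?_, ?_⟩⟩
  · refine far_progressionBlowup ha hah hSm le_rfl hn hε.le ?_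
    push_cast
    calc 4 * ((h : ℝ) ^ 2 * h * (h ^ 2 * m)) ^ 2 * ε
        = (m : ℝ) * (4 * (h ^ 2 * h * h ^ 2) ^ 2 * ε * m) := by ring
      _ ≤ (m : ℝ) * #S := by gcongr
  · have hn' : h * (h ^ 2 * m) ≤ n := hn.trans' (by gcongr; nlinarith)
    refine (copyCount_progressionBlowup_le hcycles (fun i => (hah i).le) hS hn').trans ?_
    gcongr
    refine hmε.trans' (le_of_eq ?_)
    push_cast
    field_simp

end
end

section
/- Let F be a family of graphs such that (1) F contains a bipartite graph, a co-bipartite graph and a split graph, and (2) the property P*_F of being induced F-free has the blowup quality. Then P*_F is easily testable. -/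
open scoped Classical
open Finset

noncomputable section

/-- `G` is a `g`-blowup of `F`: the vertices of `G` can be partitioned into parts `P_i`
(`i ∈ V(F)`, the fibres of `φ`) such that the bipartite graph between `P_i` and `P_j` is
complete if `(i,j) ∈ E(F)` and empty otherwise, and `P_i` is a clique if `g i = true` and an
independent set if `g i = false`. -/
def IsGBlowup {p : ℕ} (F : SimpleGraph (Fin p)) (g : Fin p → Bool) {V : Type*}
    (G : SimpleGraph V) : Prop :=
  ∃ φ : V → Fin p, Function.Surjective φ ∧ ∀ u v : V, u ≠ v →
    (G.Adj u v ↔ if φ u = φ v then g (φ u) = true else F.Adj (φ u) (φ v))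

/-- A graph property has the blowup quality if for every graph `F` satisfying it there
is `g : V(F) → {0,1}` such that every `g`-blowup of `F` satisfies it. -/
def BlowupQuality (P : ∀ n : ℕ, Set (SimpleGraph (Fin n))) : Prop :=
  ∀ p : ℕ, ∀ F : SimpleGraph (Fin p), F ∈ P p →
    ∃ g : Fin p → Bool, ∀ n : ℕ, ∀ G : SimpleGraph (Fin n), IsGBlowup F g G → G ∈ P n

/-!
Vertices are compared by the normalised Hamming distance of their neighbourhoods. Let `z` be a large
multiple of `1 / ε`, and call a vertex isolated if only a `1 / poly(z)` fraction of the vertices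
lies within distance `1 / z` of it.

If more than a `1 / z` fraction of the vertices is isolated, a random sample of size `poly(z)`
contains many vertices with pairwise distant neighbourhoods, which have distinct traces on `z ^ 2`
further random vertices. By the Sauer–Shelah lemma a large set of sampled vertices is shattered. By
Ramsey's theorem, both sides of the shattering can be taken homogeneous, and so the sample contains
an induced copy of the bipartite, the co-bipartite or the split member of the family.

Otherwise all but a `1 / z` fraction of the vertices split into `poly(z)` small classes of
near-twins. A random sample meets almost all of the classes, and then `G` is within `ε n²` edits of
every graph which agrees with a blowup of the sampled graph between distinct parts. The blowup
quality provides such a graph with the property if the sampled graph has it, which is impossible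
for `G` far from the property.
-/

open scoped BigOperators

section Probability

variable {α β Ω : Type*} [Fintype α] [Fintype β] [Fintype Ω] {p q : Ω → Prop}

/-- The probability of the event `p` for the uniform distribution on `Ω`. It is `0` if `Ω` is
empty. -/
def prob (p : Ω → Prop) : ℝ := 𝔼 ω, if p ω then 1 else 0

theorem prob_nonneg : 0 ≤ prob p :=
  expect_nonneg fun ω _ => by split_ifs <;> norm_num

theorem prob_eq_card_div_card (p : Ω → Prop) [DecidablePred p] :
    prob p = (#{ω | p ω} : ℝ) / Fintype.card Ω := by
  rw [prob, Fintype.expect_eq_sum_div_card, ← sum_boole]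
  congr!

theorem prob_mono (h : ∀ ω, p ω → q ω) : prob p ≤ prob q := by
  refine expect_le_expect fun ω _ => ?_
  by_cases hp : p ω
  · rw [if_pos hp, if_pos (h ω hp)]
  · rw [if_neg hp]
    split_ifs <;> norm_num

theorem prob_le_one : prob p ≤ 1 := by
  rw [prob_eq_card_div_card]
  exact div_le_one_of_le₀ (by exact_mod_cast card_le_univ _) (Nat.cast_nonneg _)

theorem prob_add_prob_not [Nonempty Ω] : prob p + prob (fun ω => ¬p ω) = 1 := by
  rw [prob, prob, ← expect_add_distrib, ← Fintype.expect_const (ι := Ω) (1 : ℝ)]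
  exact expect_congr rfl fun ω _ => by by_cases hp : p ω <;> simp [hp]

theorem prob_or_le : prob (fun ω => p ω ∨ q ω) ≤ prob p + prob q := by
  rw [prob, prob, prob, ← expect_add_distrib]
  refine expect_le_expect fun ω _ => ?_
  by_cases hp : p ω <;> by_cases hq : q ω <;> simp [hp, hq]

theorem prob_exists_le {ι : Type*} (s : Finset ι) (p : ι → Ω → Prop) :
    prob (fun ω => ∃ i ∈ s, p i ω) ≤ ∑ i ∈ s, prob (p i) := by
  rw [show ∑ i ∈ s, prob (p i) = 𝔼 ω, ∑ i ∈ s, if p i ω then 1 else 0 from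
    (expect_sum_comm _ _ _).symm]
  refine expect_le_expect fun ω _ => ?_
  have hterm (i) : (0 : ℝ) ≤ if p i ω then 1 else 0 := by split_ifs <;> norm_num
  split_ifs with h
  · obtain ⟨i, hi, hp⟩ := h
    simpa only [if_pos hp] using single_le_sum (f := fun i => if p i ω then (1 : ℝ) else 0)
      (fun i _ => hterm i) hi
  · exact sum_nonneg fun i _ => hterm i

theorem prob_comp_equiv (e : α ≃ Ω) (p : Ω → Prop) : prob (fun a => p (e a)) = prob p :=
  Fintype.expect_equiv e _ _ fun _ => rfl

theorem prob_prod (p : α × β → Prop) : prob p = 𝔼 a, prob fun b => p (a, b) :=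
  expect_product univ univ _

theorem prob_prod_and (p : α → Prop) (q : β → Prop) :
    prob (fun x : α × β => p x.1 ∧ q x.2) = prob p * prob q := by
  rw [prob_prod, prob, prob, expect_mul_expect]
  simp only [prob, ite_mul, one_mul, zero_mul]
  refine expect_congr rfl fun a _ => ?_
  by_cases ha : p a <;> simp [ha]

theorem prob_le_of_injOn {e : Ω → Ω} (hmem : ∀ ω, p ω → q (e ω)) (hinj : Set.InjOn e {ω | p ω}) :
    prob p ≤ prob q := by
  rw [prob_eq_card_div_card, prob_eq_card_div_card]
  refine div_le_div_of_nonneg_right (Nat.cast_le.2 ?_) (Nat.cast_nonneg _)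
  refine card_le_card_of_injOn e (fun ω hω => ?_) fun ω hω ω' hω' h => ?_
  · exact mem_coe.2 (mem_filter.2 ⟨mem_univ _, hmem ω (mem_filter.1 (mem_coe.1 hω)).2⟩)
  · exact hinj (mem_filter.1 (mem_coe.1 hω)).2 (mem_filter.1 (mem_coe.1 hω')).2 h

theorem expect_le_of_forall_le {f : Ω → ℝ} {r : ℝ} (hr : 0 ≤ r) (h : ∀ ω, f ω ≤ r) :
    𝔼 ω, f ω ≤ r := by
  cases isEmpty_or_nonempty Ω
  · simpa using hr
  · exact expect_le univ_nonempty fun ω _ => h ω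

theorem prob_le_of_forall_fiber {α : Type*} [Finite α] {r : ℝ} (hr : 0 ≤ r) (e : Ω ≃ α × β)
    (h : ∀ a, prob (fun b => p (e.symm (a, b))) ≤ r) : prob p ≤ r := by
  have := Fintype.ofFinite α
  rw [← prob_comp_equiv e.symm, prob_prod]
  exact expect_le_of_forall_le hr h

theorem mul_prob_le_expect {f : Ω → ℝ} (hf : ∀ ω, 0 ≤ f ω) {r : ℝ} :
    r * prob (fun ω => r ≤ f ω) ≤ 𝔼 ω, f ω := by
  rw [prob, mul_expect]
  refine expect_le_expect fun ω _ => ?_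
  split_ifs with h
  · simpa using h
  · simpa using hf ω

theorem prob_forall {ι : Type*} [Fintype ι] [DecidableEq ι] (p : Ω → Prop) :
    prob (fun f : ι → Ω => ∀ i, p (f i)) = prob p ^ Fintype.card ι := by
  have hcard := Fintype.card_piFinset fun _ : ι => ({ω | p ω} : Finset Ω)
  rw [prod_const, card_univ] at hcard
  rw [prob_eq_card_div_card, prob_eq_card_div_card, div_pow, Fintype.card_fun, ← Nat.cast_pow,
    ← Nat.cast_pow, ← hcard]
  congr 3
  ext f
  simp only [mem_filter, mem_univ, true_and, Fintype.mem_piFinset]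

theorem prob_forall_not_le_exp {ι : Type*} [Fintype ι] [DecidableEq ι] (p : Ω → Prop) :
    prob (fun f : ι → Ω => ∀ i, ¬p (f i)) ≤ Real.exp (-(Fintype.card ι * prob p)) := by
  cases isEmpty_or_nonempty Ω
  · simpa [prob] using (prob_le_one : prob (fun f : ι → Ω => ∀ i, ¬p (f i)) ≤ 1)
  · rw [prob_forall fun ω => ¬p ω, ← mul_neg, Real.exp_nat_mul,
      eq_sub_of_add_eq' (prob_add_prob_not (p := p))]
    exact pow_le_pow_left₀ (sub_nonneg.2 prob_le_one) (Real.one_sub_le_exp_neg _) _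

theorem prob_comp_injective_le {ι κ : Type*} [Fintype ι] [Fintype κ]
    [DecidableEq ι] [DecidableEq κ] {e : κ → ι} (he : Function.Injective e) (p : (κ → Ω) → Prop) :
    prob (fun f : ι → Ω => p (f ∘ e)) ≤ prob p := by
  let split : (ι → Ω) ≃ ({i // i ∉ Set.range e} → Ω) × (κ → Ω) :=
    (Equiv.piEquivPiSubtypeProd (· ∈ Set.range e) fun _ => Ω).trans <|
      (Equiv.prodComm _ _).trans <|
        (Equiv.refl _).prodCongr ((Equiv.ofInjective e he).arrowCongr (Equiv.refl Ω)).symm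
  refine prob_le_of_forall_fiber prob_nonneg split fun a => prob_mono fun b hb => ?_
  have hcomp : split.symm (a, b) ∘ e = b := congrArg Prod.snd (split.apply_symm_apply (a, b))
  rwa [hcomp] at hb

/-- A coordinate of a random function can be redrawn last, all others being fixed. -/
theorem prob_le_of_forall_update {ι : Type*} [Fintype ι] [DecidableEq ι] (i : ι)
    {p : (ι → Ω) → Prop} {r : ℝ} (hr : 0 ≤ r)
    (h : ∀ f : ι → Ω, prob (fun v => p (Function.update f i v)) ≤ r) : prob p ≤ r := by
  cases isEmpty_or_nonempty Ω with
  | inl _ =>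
    have : Nonempty ι := ⟨i⟩
    simpa [prob] using hr
  | inr hΩ =>
    obtain ⟨ω₀⟩ := hΩ
    refine prob_le_of_forall_fiber hr ((Equiv.funSplitAt i Ω).trans (Equiv.prodComm _ _)) fun g =>
      (prob_mono fun v hv => ?_).trans (h fun j => if hj : j = i then ω₀ else g ⟨j, hj⟩)
    convert hv using 1
    ext j
    by_cases hj : j = i
    · subst hj
      simp [Equiv.funSplitAt, Equiv.piSplitAt]
    · simp [Equiv.funSplitAt, Equiv.piSplitAt, hj]

end Probability

section RandomSubset

theorem prob_smul {G Ω : Type*} [Group G] [Fintype G] [MulAction G Ω] [Fintype Ω]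
    [MulAction.IsPretransitive G Ω] (p : Ω → Prop) (ω : Ω) :
    prob (fun g : G => p (g • ω)) = prob p := by
  have hconst (ω' : Ω) : prob (fun g : G => p (g • ω')) = prob fun g : G => p (g • ω) := by
    obtain ⟨h, rfl⟩ := MulAction.exists_smul_eq G ω ω'
    simpa only [Equiv.coe_mulRight, mul_smul] using
      prob_comp_equiv (Equiv.mulRight h) fun g => p (g • ω)
  have : Nonempty Ω := ⟨ω⟩
  calc prob (fun g : G => p (g • ω))
      = 𝔼 ω', prob fun g : G => p (g • ω') := by
        rw [expect_congr rfl fun ω' _ => hconst ω', Fintype.expect_const]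
    _ = 𝔼 g : G, prob fun ω' => p (g • ω') := expect_comm _ _ _
    _ = prob p := by
        have hg (g : G) : prob (fun ω' => p (g • ω')) = prob p :=
          prob_comp_equiv (MulAction.toPerm g) p
        rw [expect_congr rfl fun g _ => hg g, Fintype.expect_const]

/-- Sampling with replacement is dominated by sampling at least as many points without. -/
theorem prob_range_le_prob_powersetCard {ι V : Type*} [Fintype ι] [DecidableEq ι] [Fintype V]
    {q : ℕ} (hι : Fintype.card ι ≤ q) (hq : q ≤ Fintype.card V) {p : Set V → Prop}
    (hp : Monotone p) :
    prob (fun f : ι → V => p (Set.range f)) ≤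
      prob fun Q : Set.powersetCard V q => p (Q : Finset V) := by
  have hperm (σ : Equiv.Perm V) : prob (fun f : ι → V => p (Set.range (σ ∘ f))) =
      prob fun f : ι → V => p (Set.range f) :=
    prob_comp_equiv ((Equiv.refl ι).arrowCongr σ) fun f : ι → V => p (Set.range f)
  have : MulAction.IsPretransitive (Equiv.Perm V) (Set.powersetCard V q) :=
    Set.powersetCard.isPretransitive
  rw [← Fintype.expect_const (ι := Equiv.Perm V) (prob _), ← expect_congr rfl fun σ _ => hperm σ]
  refine (expect_comm _ _ _).trans_le <| expect_le_of_forall_le prob_nonneg fun f => ?_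
  obtain ⟨Q, hfQ, hQ⟩ := exists_superset_card_eq
    ((card_image_le.trans_eq card_univ).trans hι : #(univ.image f) ≤ q) hq
  rw [← prob_smul (G := Equiv.Perm V) (fun Q : Set.powersetCard V q => p (Q : Finset V)) ⟨Q, hQ⟩]
  refine prob_mono fun σ => hp ?_
  rintro _ ⟨i, rfl⟩
  exact mem_coe.2 <| smul_mem_smul_finset (hfQ (mem_image_of_mem f (mem_univ i)))

theorem prob_powersetCard {V : Type*} [Fintype V] {q : ℕ} (p : Finset V → Prop) :
    prob (fun Q : Set.powersetCard V q => p Q) =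
      (#{Q ∈ powersetCard q univ | p Q} : ℝ) / #(powersetCard q (univ : Finset V)) := by
  calc prob (fun Q : Set.powersetCard V q => p Q)
      = 𝔼 Q ∈ powersetCard q univ, if p Q then (1 : ℝ) else 0 :=
        expect_bij (fun Q _ => Q) (fun Q _ => mem_powersetCard_univ.2 Q.2) (fun _ _ => rfl)
          (fun _ _ _ _ => Subtype.ext)
          fun Q hQ => ⟨⟨Q, mem_powersetCard_univ.1 hQ⟩, mem_univ _, rfl⟩
    _ = _ := by rw [expect_eq_sum_div_card, sum_boole]

end RandomSubset

section Ramsey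

universe u

theorem exists_isNClique_or_isNClique_compl (a b : ℕ) :
    ∃ N, ∀ {V : Type u} (G : SimpleGraph V) (S : Finset V), N ≤ #S →
      (∃ T ⊆ S, G.IsNClique a T) ∨ ∃ T ⊆ S, Gᶜ.IsNClique b T := by
  induction a generalizing b with
  | zero => exact ⟨0, fun G S _ => .inl ⟨∅, empty_subset S, G.isNClique_zero.2 rfl⟩⟩
  | succ a iha =>
    induction b with
    | zero => exact ⟨0, fun G S _ => .inr ⟨∅, empty_subset S, Gᶜ.isNClique_zero.2 rfl⟩⟩
    | succ b ihb =>
      obtain ⟨M, hM⟩ := iha (b + 1)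
      obtain ⟨N, hN⟩ := ihb
      refine ⟨M + N + 1, fun {V} G S hS => ?_⟩
      obtain ⟨v, hv⟩ := card_pos.1 (Nat.zero_lt_of_lt hS)
      have hsplit : #{w ∈ S.erase v | G.Adj v w} + #{w ∈ S.erase v | ¬G.Adj v w} + 1 = #S := by
        rw [card_filter_add_card_filter_not, card_erase_add_one hv]
      have hsub {T : Finset V} {p : V → Prop} [DecidablePred p]
          (hT : T ⊆ {w ∈ S.erase v | p w}) : T ⊆ S :=
        hT.trans <| (filter_subset _ _).trans (erase_subset _ _)
      rcases le_or_gt M #{w ∈ S.erase v | G.Adj v w} with hM' | hM'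
      · rcases hM G _ hM' with ⟨T, hTS, hT⟩ | ⟨T, hTS, hT⟩
        · exact .inl ⟨insert v T, insert_subset hv (hsub hTS),
            hT.insert fun w hw => (mem_filter.1 (hTS hw)).2⟩
        · exact .inr ⟨T, hsub hTS, hT⟩
      · rcases hN G {w ∈ S.erase v | ¬G.Adj v w} (by omega) with ⟨T, hTS, hT⟩ | ⟨T, hTS, hT⟩
        · exact .inl ⟨T, hsub hTS, hT⟩
        · refine .inr ⟨insert v T, insert_subset hv (hsub hTS), hT.insert fun w hw => ?_⟩
          obtain ⟨hw, hvw⟩ := mem_filter.1 (hTS hw)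
          exact (G.compl_adj v w).2 ⟨(ne_of_mem_erase hw).symm, hvw⟩

theorem exists_card_eq_pairwise_adj_iff (m : ℕ) :
    ∃ N, ∀ {V : Type u} (G : SimpleGraph V) (S : Finset V), N ≤ #S →
      ∃ T ⊆ S, #T = m ∧ ∃ c : Prop, (T : Set V).Pairwise fun u v => G.Adj u v ↔ c := by
  obtain ⟨N, hN⟩ := exists_isNClique_or_isNClique_compl m m
  refine ⟨N, fun G S hS => ?_⟩
  rcases hN G S hS with ⟨T, hTS, hT, hcard⟩ | ⟨T, hTS, hT, hcard⟩
  · exact ⟨T, hTS, hcard, True, fun u hu v hv huv => iff_of_true (hT hu hv huv) trivial⟩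
  · exact ⟨T, hTS, hcard, False,
      fun u hu v hv huv => iff_of_false ((G.compl_adj u v).1 (hT hu hv huv)).2 id⟩

end Ramsey

section Shattering

open SimpleGraph

/-- The vertices of `H` split into two parts inside which adjacency of distinct vertices is
constantly `a`, respectively constantly `b`. Bipartite, co-bipartite and split graphs are the cases
`(False, False)`, `(True, True)` and `(True, False)`. -/
def HasHomogeneousBipartition {W : Type*} (H : SimpleGraph W) (a b : Prop) : Prop :=
  ∃ A : Set W, A.Pairwise (fun u v => H.Adj u v ↔ a) ∧ Aᶜ.Pairwise (fun u v => H.Adj u v ↔ b)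

theorem exists_bound_hasHomogeneousBipartition {𝓕 : Set (Σ k : ℕ, SimpleGraph (Fin k))}
    (hbip : ∃ p ∈ 𝓕, IsBipGraph p.2) (hcobip : ∃ p ∈ 𝓕, IsCoBipGraph p.2)
    (hsplit : ∃ p ∈ 𝓕, IsSplitGraph p.2) :
    ∃ N, ∀ a b : Prop, ∃ p ∈ 𝓕, p.1 ≤ N ∧ HasHomogeneousBipartition p.2 a b := by
  obtain ⟨p₀, hp₀, A₀, h₀, h₀'⟩ := hbip
  obtain ⟨p₁, hp₁, A₁, h₁, h₁'⟩ := hcobip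
  obtain ⟨p₂, hp₂, A₂, h₂, h₂'⟩ := hsplit
  refine ⟨max p₀.1 (max p₁.1 p₂.1), fun a b => ?_⟩
  by_cases ha : a <;> by_cases hb : b <;> simp only [ha, hb]
  · exact ⟨p₁, hp₁, by simp, A₁, fun u hu v hv huv => by simpa using h₁ u hu v hv huv,
      fun u hu v hv huv => by simpa using h₁' u hu v hv huv⟩
  · exact ⟨p₂, hp₂, by simp, A₂, fun u hu v hv huv => by simpa using h₂ u hu v hv huv,
      fun u hu v hv _ => by simpa using h₂' u hu v hv⟩
  · exact ⟨p₂, hp₂, by simp, A₂ᶜ, fun u hu v hv _ => by simpa using h₂' u hu v hv,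
      fun u hu v hv huv => by simpa using h₂ u (by simpa using hu) v (by simpa using hv) huv⟩
  · exact ⟨p₀, hp₀, by simp, A₀, fun u hu v hv _ => by simpa using h₀ u hu v hv,
      fun u hu v hv _ => by simpa using h₀' u hu v hv⟩

/-- The spare index `none` only serves to keep the vertices `x i` apart from the vertices `y S`. -/
theorem HasHomogeneousBipartition.isIndContained {V W : Type*} {H : SimpleGraph W}
    {G : SimpleGraph V} {a b : Prop} (hH : HasHomogeneousBipartition H a b)
    {x : W ⊕ Option W → V} {y : Set (W ⊕ Option W) → V}
    (hxy : ∀ i S, G.Adj (x i) (y S) ↔ i ∈ S)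
    (hx : Pairwise fun i j => G.Adj (x i) (x j) ↔ a)
    (hy : Pairwise fun S T => G.Adj (y S) (y T) ↔ b) : H ⊴ G := by
  obtain ⟨A, hA, hA'⟩ := hH
  let S (v : W) : Set (W ⊕ Option W) := {i | Sum.elim (H.Adj v) (· = some v) i}
  have hSinj : Function.Injective S := fun u v huv => by
    simpa [S] using Set.ext_iff.1 huv (.inr (some u))
  have hxinj : Function.Injective x := fun i j hij =>
    (hxy j {i}).1 (hij ▸ (hxy i {i}).2 rfl) |>.symm
  have hyinj : Function.Injective y := fun S T hST => Set.ext fun i => by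
    rw [← hxy i S, ← hxy i T, hST]
  have hne (u v : W) : x (.inl u) ≠ y (S v) := fun h => by
    have h₁ : G.Adj (x (.inr (some v))) (x (.inl u)) ↔ a := hx (by simp)
    have h₂ : G.Adj (x (.inr none)) (x (.inl u)) ↔ a := hx (by simp)
    rw [h, hxy] at h₁ h₂
    simp [S, ← h₁] at h₂
  have hcross (u v : W) : G.Adj (x (.inl u)) (y (S v)) ↔ H.Adj u v := by
    rw [hxy, H.adj_comm]
    rfl
  let e (v : W) : V := if v ∈ A then x (.inl v) else y (S v)
  have he : Function.Injective e := fun u v huv => by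
    by_cases hu : u ∈ A <;> by_cases hv : v ∈ A <;> simp only [e, hu, hv, if_true, if_false] at huv
    · exact Sum.inl_injective (hxinj huv)
    · exact (hne u v huv).elim
    · exact (hne v u huv.symm).elim
    · exact hSinj (hyinj huv)
  refine ⟨⟨⟨e, he⟩, fun {u v} => ?_⟩⟩
  rcases eq_or_ne u v with rfl | huv
  · simp
  by_cases hu : u ∈ A <;> by_cases hv : v ∈ A <;>
    simp only [Function.Embedding.coeFn_mk, e, hu, hv, if_true, if_false]
  · exact (hx (Sum.inl_injective.ne huv)).trans (hA hu hv huv).symm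
  · exact hcross u v
  · rw [G.adj_comm, hcross, H.adj_comm]
  · exact (hy (hSinj.ne huv)).trans (hA' hu hv huv).symm

theorem exists_isIndContained_of_shattered {𝓕 : Set (Σ k : ℕ, SimpleGraph (Fin k))} {N : ℕ}
    (h𝓕 : ∀ a b : Prop, ∃ p ∈ 𝓕, p.1 ≤ N ∧ HasHomogeneousBipartition p.2 a b) :
    ∃ D, ∀ {V : Type*} {κ : Type*} (G : SimpleGraph V) (y : κ → V) (A : Finset κ), D ≤ #A →
      (∀ B ⊆ A, ∃ v, ∀ t ∈ A, G.Adj v (y t) ↔ t ∈ B) → ∃ p ∈ 𝓕, p.2 ⊴ G := by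
  obtain ⟨m, hm⟩ := exists_card_eq_pairwise_adj_iff (2 * N + 1)
  obtain ⟨D, hD⟩ := exists_card_eq_pairwise_adj_iff (2 ^ m)
  refine ⟨D, fun G y A hA hshatter => ?_⟩
  obtain ⟨T, hTA, hTcard, b, hT⟩ := hD (G.comap y) A hA
  let e : Set (Fin m) ≃ T := Fintype.equivOfCardEq (by simp [hTcard])
  have htrace (i : Fin m) : ∃ v, ∀ S, G.Adj v (y (e S)) ↔ i ∈ S := by
    obtain ⟨v, hv⟩ := hshatter {t ∈ A | ∃ S, i ∈ S ∧ (e S : _) = t} (filter_subset _ _)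
    exact ⟨v, fun S => by simp [hv _ (hTA (e S).2), hTA (e S).2]⟩
  choose x hx using htrace
  obtain ⟨U, -, hUcard, a, hU⟩ := hm (G.comap x) univ (by simp)
  obtain ⟨p, hp, hpN, hbip⟩ := h𝓕 a b
  obtain ⟨f, hf⟩ := Function.Embedding.exists_of_card_le_finset
    (α := Fin p.1 ⊕ Option (Fin p.1)) (s := U) (by simp; omega)
  refine ⟨p, hp, hbip.isIndContained (x := x ∘ f) (y := fun S => y (e (f '' S)))
    (fun i S => ?_) (fun i j hij => ?_) fun S S' hS => ?_⟩
  · rw [Function.comp_apply, hx, f.injective.mem_set_image]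
  · exact hU (hf ⟨i, rfl⟩) (hf ⟨j, rfl⟩) (f.injective.ne hij)
  · exact hT (e _).2 (e _).2 <|
      Subtype.coe_injective.ne <| e.injective.ne <| f.injective.image_injective.ne hS

theorem exists_shatters_of_pow_le_card {α : Type*} [Fintype α] {𝒜 : Finset (Finset α)} {D : ℕ}
    (hα : 2 ≤ Fintype.card α) (h𝒜 : Fintype.card α ^ D ≤ #𝒜) : ∃ A, D ≤ #A ∧ 𝒜.Shatters A := by
  have hvc : D ≤ 𝒜.vcDim := by
    by_contra! hlt
    refine (h𝒜.trans (card_le_card_shatterer 𝒜)).not_gt ?_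
    calc #𝒜.shatterer ≤ ∑ k ∈ Iic 𝒜.vcDim, (Fintype.card α).choose k := card_shatterer_le_sum_vcDim
      _ ≤ ∑ k ∈ range D, Fintype.card α ^ k :=
        (sum_le_sum fun k _ => Nat.choose_le_pow _ k).trans <|
          sum_le_sum_of_subset fun k hk => mem_range.2 ((mem_Iic.1 hk).trans_lt hlt)
      _ < Fintype.card α ^ D := Nat.geomSum_lt hα fun k hk => mem_range.1 hk
  have hpos : 0 < #𝒜 := (Nat.pow_pos (by omega)).trans_le h𝒜
  obtain ⟨A, hA, hcard⟩ := exists_mem_eq_sup 𝒜.shatterer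
    (card_pos.1 (hpos.trans_le (card_le_card_shatterer 𝒜))) card
  exact ⟨A, hvc.trans_eq hcard, mem_shatterer.1 hA⟩

/-- `X` induces a subgraph of `G` that contains an induced copy of a member of `𝓕`. -/
def ContainsMember {V : Type*} (𝓕 : Set (Σ k : ℕ, SimpleGraph (Fin k))) (G : SimpleGraph V)
    (X : Set V) : Prop :=
  ∃ p ∈ 𝓕, p.2 ⊴ G.induce X

theorem exists_containsMember_of_injective_trace {𝓕 : Set (Σ k : ℕ, SimpleGraph (Fin k))} {N : ℕ}
    (h𝓕 : ∀ a b : Prop, ∃ p ∈ 𝓕, p.1 ≤ N ∧ HasHomogeneousBipartition p.2 a b) :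
    ∃ D, ∀ {V κ τ : Type*} [Fintype κ] [Fintype τ] (G : SimpleGraph V) (X : Set V)
      (x : κ → V) (y : τ → V), (∀ i, x i ∈ X) → (∀ t, y t ∈ X) →
      2 ≤ Fintype.card τ → Fintype.card τ ^ D ≤ Fintype.card κ →
      Function.Injective (fun i => {t | G.Adj (x i) (y t)}) → ContainsMember 𝓕 G X := by
  obtain ⟨D, hD⟩ := exists_isIndContained_of_shattered h𝓕
  refine ⟨D, fun {V κ τ} _ _ G X x y hx hy hτ hcard hinj => ?_⟩
  let trace (i : κ) : Finset τ := {t | G.Adj (x i) (y t)}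
  have htrace : Function.Injective trace := fun i j hij =>
    hinj <| Set.ext fun t => by simpa [trace] using Finset.ext_iff.1 hij t
  obtain ⟨A, hA, hshatter⟩ := exists_shatters_of_pow_le_card (𝒜 := univ.image trace) hτ
    (hcard.trans_eq (card_image_of_injective _ htrace).symm)
  refine hD (G.induce X) (fun t => ⟨y t, hy t⟩) A hA fun B hB => ?_
  obtain ⟨_, hC, hCB⟩ := hshatter hB
  obtain ⟨i, -, rfl⟩ := mem_image.1 hC
  exact ⟨⟨x i, hx i⟩, fun t ht => by simp [← hCB, trace, ht]⟩

theorem monotone_containsMember {V : Type*} (𝓕 : Set (Σ k : ℕ, SimpleGraph (Fin k)))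
    (G : SimpleGraph V) : Monotone (ContainsMember 𝓕 G) :=
  fun _ _ hXY ⟨p, hp, h⟩ => ⟨p, hp, h.trans ⟨G.induceHomOfLE hXY⟩⟩

theorem inducedOn_notMem_inducedFree_iff {𝓕 : Set (Σ k : ℕ, SimpleGraph (Fin k))} {n q : ℕ}
    {G : SimpleGraph (Fin n)} {Q : Finset (Fin n)} (hQ : #Q = q) :
    inducedOn G Q hQ ∉ InducedFree 𝓕 q ↔ ContainsMember 𝓕 G Q := by
  have e : inducedOn G Q hQ ≃g G.induce (Q : Set (Fin n)) :=
    SimpleGraph.Iso.comap (Q.orderIsoOfFin hQ).toEquiv (G.induce (Q : Set (Fin n)))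
  simp only [InducedFree, Set.mem_ofPred_eq, not_forall, not_isEmpty_iff, ContainsMember,
    exists_prop, IsIndContained]
  exact exists_congr fun p => and_congr_right fun _ =>
    ⟨fun ⟨f⟩ => ⟨e.toEmbedding.comp f⟩, fun ⟨f⟩ => ⟨e.symm.toEmbedding.comp f⟩⟩

end Shattering

section NeighbourhoodDistance

variable {V : Type*} [Fintype V] {G : SimpleGraph V}

/-- The normalised Hamming distance of the neighbourhoods of `u` and `v`. -/
def nbrDist (G : SimpleGraph V) (u v : V) : ℝ :=
  prob fun w => ¬(G.Adj u w ↔ G.Adj v w)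

theorem nbrDist_self (G : SimpleGraph V) (v : V) : nbrDist G v v = 0 := by
  simp [nbrDist, prob]

theorem nbrDist_comm (G : SimpleGraph V) (u v : V) : nbrDist G u v = nbrDist G v u := by
  simp only [nbrDist, iff_comm]

theorem nbrDist_triangle (G : SimpleGraph V) (u v w : V) :
    nbrDist G u w ≤ nbrDist G u v + nbrDist G v w :=
  (prob_mono fun _ => by tauto).trans prob_or_le

/-- `v` is neighbourhood-isolated if the ball of radius `δ` around `v` for the neighbourhood
distance has density below `η`. -/
def IsNbrIsolated (G : SimpleGraph V) (δ η : ℝ) (v : V) : Prop :=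
  prob (fun w => nbrDist G v w ≤ δ) < η

end NeighbourhoodDistance

section ManyIsolated

variable {V κ τ : Type*} [Fintype V] {G : SimpleGraph V} {δ η : ℝ}

theorem exists_injective_trace {x : κ × τ → V} {y : τ → V}
    (hiso : ∀ i, ∃ t, IsNbrIsolated G δ η (x (i, t)))
    (hfar : ∀ a b, a ≠ b → IsNbrIsolated G δ η (x a) → δ < nbrDist G (x a) (x b))
    (hsep : ∀ a b, a ≠ b → δ < nbrDist G (x a) (x b) →
      ∃ t, ¬(G.Adj (x a) (y t) ↔ G.Adj (x b) (y t))) :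
    ∃ j : κ → τ, Function.Injective fun i => {t | G.Adj (x (i, j i)) (y t)} := by
  choose j hj using hiso
  refine ⟨j, fun i i' hii' => ?_⟩
  by_contra hne
  have hne' : (i, j i) ≠ (i', j i') := fun h => hne (Prod.ext_iff.1 h).1
  obtain ⟨t, ht⟩ := hsep _ _ hne' (hfar _ _ hne' (hj i))
  exact ht (Set.ext_iff.1 hii' t)

variable [Fintype κ] [Fintype τ] [DecidableEq κ] [DecidableEq τ]

theorem prob_exists_forall_not_isNbrIsolated_le (hδ : δ ≤ prob (IsNbrIsolated G δ η)) :
    prob (fun x : κ × τ → V => ∃ i, ∀ t, ¬IsNbrIsolated G δ η (x (i, t))) ≤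
      Fintype.card κ * Real.exp (-(Fintype.card τ * δ)) := by
  have hgroup (i : κ) : prob (fun x : κ × τ → V => ∀ t, ¬IsNbrIsolated G δ η (x (i, t))) ≤
      Real.exp (-(Fintype.card τ * δ)) :=
    calc prob (fun x : κ × τ → V => ∀ t, ¬IsNbrIsolated G δ η (x (i, t)))
        ≤ prob fun f : τ → V => ∀ t, ¬IsNbrIsolated G δ η (f t) :=
          prob_comp_injective_le (Prod.mk_right_injective i)
            fun f : τ → V => ∀ t, ¬IsNbrIsolated G δ η (f t)
      _ ≤ Real.exp (-(Fintype.card τ * prob (IsNbrIsolated G δ η))) := prob_forall_not_le_exp _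
      _ ≤ Real.exp (-(Fintype.card τ * δ)) := by gcongr
  calc prob (fun x : κ × τ → V => ∃ i, ∀ t, ¬IsNbrIsolated G δ η (x (i, t)))
      ≤ prob fun x : κ × τ → V => ∃ i ∈ univ, ∀ t, ¬IsNbrIsolated G δ η (x (i, t)) :=
        prob_mono fun x ⟨i, hi⟩ => ⟨i, mem_univ i, hi⟩
    _ ≤ ∑ i, prob (fun x : κ × τ → V => ∀ t, ¬IsNbrIsolated G δ η (x (i, t))) := prob_exists_le _ _
    _ ≤ Fintype.card κ * Real.exp (-(Fintype.card τ * δ)) := by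
        simpa using sum_le_card_nsmul univ _ _ fun i _ => hgroup i

theorem prob_isNbrIsolated_and_nbrDist_le {ι : Type*} [Fintype ι] [DecidableEq ι]
    {a b : ι} (hab : a ≠ b) (hη : 0 ≤ η) :
    prob (fun x : ι → V => IsNbrIsolated G δ η (x a) ∧ nbrDist G (x a) (x b) ≤ δ) ≤ η := by
  refine prob_le_of_forall_update b hη fun f => ?_
  simp only [Function.update_self, Function.update_of_ne hab]
  by_cases ha : IsNbrIsolated G δ η (f a)
  · exact (prob_mono fun v hv => hv.2).trans ha.le
  · simpa [ha, prob] using hη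

theorem prob_forall_adj_iff_le_exp (u v : V) :
    prob (fun y : τ → V => ∀ t, G.Adj u (y t) ↔ G.Adj v (y t)) ≤
      Real.exp (-(Fintype.card τ * nbrDist G u v)) := by
  simpa only [not_not, nbrDist] using
    prob_forall_not_le_exp (ι := τ) fun w => ¬(G.Adj u w ↔ G.Adj v w)

theorem prob_lt_nbrDist_and_forall_adj_iff_le {ι : Type*} [Fintype ι] [DecidableEq ι]
    (a b : ι) :
    prob (fun ω : (ι → V) × (τ → V) => δ < nbrDist G (ω.1 a) (ω.1 b) ∧
      ∀ t, G.Adj (ω.1 a) (ω.2 t) ↔ G.Adj (ω.1 b) (ω.2 t)) ≤ Real.exp (-(Fintype.card τ * δ)) := by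
  refine prob_le_of_forall_fiber (Real.exp_nonneg _) (Equiv.refl _) fun x => ?_
  by_cases h : δ < nbrDist G (x a) (x b)
  · refine (prob_mono fun y hy => hy.2).trans <| (prob_forall_adj_iff_le_exp _ _).trans ?_
    gcongr
  · simpa [h, prob] using Real.exp_nonneg _

theorem prob_not_exists_injective_trace_le (hη : 0 ≤ η) (hδ : δ ≤ prob (IsNbrIsolated G δ η)) :
    prob (fun ω : (κ × τ → V) × (τ → V) => ¬∃ j : κ → τ,
        Function.Injective fun i => {t | G.Adj (ω.1 (i, j i)) (ω.2 t)}) ≤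
      Fintype.card κ * Real.exp (-(Fintype.card τ * δ)) +
        (Fintype.card κ * Fintype.card τ) ^ 2 * (η + Real.exp (-(Fintype.card τ * δ))) := by
  let close (a b : κ × τ) (x : κ × τ → V) : Prop :=
    IsNbrIsolated G δ η (x a) ∧ nbrDist G (x a) (x b) ≤ δ
  let confused (a b : κ × τ) (ω : (κ × τ → V) × (τ → V)) : Prop :=
    δ < nbrDist G (ω.1 a) (ω.1 b) ∧ ∀ t, G.Adj (ω.1 a) (ω.2 t) ↔ G.Adj (ω.1 b) (ω.2 t)
  have hclose {a b : κ × τ} (hab : a ≠ b) :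
      prob (fun ω : (κ × τ → V) × (τ → V) => close a b ω.1) ≤ η :=
    prob_le_of_forall_fiber hη (Equiv.prodComm _ _) fun _ =>
      prob_isNbrIsolated_and_nbrDist_le hab hη
  have hbad : ∀ ω : (κ × τ → V) × (τ → V),
      (¬∃ j : κ → τ, Function.Injective fun i => {t | G.Adj (ω.1 (i, j i)) (ω.2 t)}) →
      (∃ i, ∀ t, ¬IsNbrIsolated G δ η (ω.1 (i, t))) ∨
        ∃ ab ∈ univ.offDiag, close ab.1 ab.2 ω.1 ∨ confused ab.1 ab.2 ω := by
    intro ω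
    contrapose!
    rintro ⟨hiso, hpair⟩
    have hpair' (a b : κ × τ) (hab : a ≠ b) := hpair (a, b) (by simpa using hab)
    exact exists_injective_trace hiso
      (fun a b hab ha => lt_of_not_ge fun h => (hpair' a b hab).1 ⟨ha, h⟩)
      fun a b hab hd => not_forall.1 fun h => (hpair' a b hab).2 ⟨hd, h⟩
  have hcard : (#(univ : Finset (κ × τ)).offDiag : ℝ) ≤
      (Fintype.card κ * Fintype.card τ : ℝ) ^ 2 := by
    rw [sq]
    exact_mod_cast (offDiag_card _).trans_le <| (Nat.sub_le _ _).trans (by simp)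
  refine (prob_mono hbad).trans <| prob_or_le.trans <| add_le_add ?_ ?_
  · exact prob_le_of_forall_fiber (by positivity) (Equiv.prodComm _ _) fun _ =>
      prob_exists_forall_not_isNbrIsolated_le hδ
  · refine (prob_exists_le _ _).trans <| (sum_le_card_nsmul _ _ _ fun ab hab => prob_or_le.trans <|
      add_le_add (hclose (mem_offDiag.1 hab).2.2)
        (prob_lt_nbrDist_and_forall_adj_iff_le _ _)).trans ?_
    rw [nsmul_eq_mul]
    gcongr

theorem exists_forall_prob_not_containsMember_le {𝓕 : Set (Σ k : ℕ, SimpleGraph (Fin k))} {N : ℕ}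
    (h𝓕 : ∀ a b : Prop, ∃ p ∈ 𝓕, p.1 ≤ N ∧ HasHomogeneousBipartition p.2 a b) :
    ∃ D, ∀ {V : Type*} [Fintype V] (G : SimpleGraph V) (z : ℕ), 2 ≤ z →
      9 * (z : ℝ) ^ (4 * D + 4) ≤ Real.exp z →
      (z : ℝ)⁻¹ ≤ prob (IsNbrIsolated G (z : ℝ)⁻¹ (9 * (z : ℝ) ^ (4 * D + 4))⁻¹) →
      prob (fun f : (Fin (z ^ (2 * D)) × Fin (z ^ 2)) ⊕ Fin (z ^ 2) → V =>
        ¬ContainsMember 𝓕 G (Set.range f)) ≤ 1 / 3 := by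
  obtain ⟨D, hD⟩ := exists_containsMember_of_injective_trace h𝓕
  refine ⟨D, fun {V} _ G z hz hexp hiso => ?_⟩
  have hz₁ : (1 : ℝ) ≤ z := by exact_mod_cast Nat.one_le_of_lt hz
  have hz₀ : (z : ℝ) ≠ 0 := by positivity
  have hcontains (f : (Fin (z ^ (2 * D)) × Fin (z ^ 2)) ⊕ Fin (z ^ 2) → V) :
      (∃ j : Fin (z ^ (2 * D)) → Fin (z ^ 2),
        Function.Injective fun i => {t | G.Adj (f (.inl (i, j i))) (f (.inr t))}) →
      ContainsMember 𝓕 G (Set.range f) := fun ⟨j, hj⟩ =>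
    hD G _ _ _ (fun i => Set.mem_range_self (.inl (i, j i))) (fun t => Set.mem_range_self (.inr t))
      (by simpa using hz.trans (Nat.le_self_pow two_ne_zero z)) (by simp [pow_mul]) hj
  have hexp' : Real.exp (-z) ≤ (9 * (z : ℝ) ^ (4 * D + 4))⁻¹ := by
    rw [Real.exp_neg]
    gcongr
  calc _ ≤ _ := prob_mono fun f => mt (hcontains f)
    _ = _ := prob_comp_equiv (Equiv.sumArrowEquivProdArrow _ _ V) fun ω => ¬∃ j : _ → _,
        Function.Injective fun i => {t | G.Adj (ω.1 (i, j i)) (ω.2 t)}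
    _ ≤ _ := prob_not_exists_injective_trace_le (by positivity) hiso
    _ ≤ (z : ℝ) ^ (4 * D + 4) * (9 * (z : ℝ) ^ (4 * D + 4))⁻¹ +
        (z : ℝ) ^ (4 * D + 4) *
          ((9 * (z : ℝ) ^ (4 * D + 4))⁻¹ + (9 * (z : ℝ) ^ (4 * D + 4))⁻¹) := by
      have hT : ((z ^ 2 : ℕ) : ℝ) * (z : ℝ)⁻¹ = z := by
        push_cast
        field_simp
      rw [Fintype.card_fin, Fintype.card_fin, hT]
      push_cast
      rw [show ((z : ℝ) ^ (2 * D) * (z : ℝ) ^ 2) ^ 2 = (z : ℝ) ^ (4 * D + 4) by ring]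
      gcongr
      omega
    _ = 1 / 3 := by
      field_simp
      norm_num

end ManyIsolated

section Blowup

theorem BlowupQuality.exists_mem_adj_iff {P : ∀ n : ℕ, Set (SimpleGraph (Fin n))}
    (hP : BlowupQuality P) {p n : ℕ} {F : SimpleGraph (Fin p)} (hF : F ∈ P p) {φ : Fin n → Fin p}
    (hφ : Function.Surjective φ) :
    ∃ H ∈ P n, ∀ u v, φ u ≠ φ v → (H.Adj u v ↔ F.Adj (φ u) (φ v)) := by
  obtain ⟨g, hg⟩ := hP p F hF
  let H := F.comap φ ⊔ SimpleGraph.fromRel fun u v => φ u = φ v ∧ g (φ u) = true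
  refine ⟨H, hg n H ⟨φ, hφ, fun u v huv => ?_⟩, fun u v huv => ?_⟩
  · by_cases h : φ u = φ v
    · simp [H, h, huv]
    · simp [H, h, Ne.symm h]
  · simp [H, huv, huv.symm]

theorem exists_mem_inducedFree_adj_iff {𝓕 : Set (Σ k : ℕ, SimpleGraph (Fin k))}
    (hblow : BlowupQuality (InducedFree 𝓕)) {n : ℕ} {G : SimpleGraph (Fin n)} {φ : Fin n → Fin n}
    (hφ : ¬ContainsMember 𝓕 G (Set.range φ)) :
    ∃ H ∈ InducedFree 𝓕 n, ∀ u v, φ u ≠ φ v → (H.Adj u v ↔ G.Adj (φ u) (φ v)) := by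
  let e := (univ.image φ).orderIsoOfFin rfl
  let φ' (v : Fin n) : Fin #(univ.image φ) := e.symm ⟨φ v, mem_image_of_mem φ (mem_univ v)⟩
  have he (v : Fin n) : (e (φ' v) : Fin n) = φ v := by simp [φ']
  have hsurj : Function.Surjective φ' := fun i => by
    obtain ⟨v, -, hv⟩ := mem_image.1 (e i).2
    exact ⟨v, e.injective (Subtype.ext ((he v).trans hv))⟩
  have hmem : inducedOn G (univ.image φ) rfl ∈ InducedFree 𝓕 #(univ.image φ) := by
    rwa [← not_not (a := _ ∈ _), inducedOn_notMem_inducedFree_iff, coe_image, coe_univ,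
      Set.image_univ]
  obtain ⟨H, hH, hadj⟩ := hblow.exists_mem_adj_iff hmem hsurj
  refine ⟨H, hH, fun u v huv => ?_⟩
  rw [hadj u v fun h => huv (by rw [← he u, ← he v, h]), inducedOn, SimpleGraph.comap_adj]
  exact iff_of_eq (congrArg₂ G.Adj (he u) (he v))

theorem editDist_le_prob_mul_sq {n : ℕ} (G H : SimpleGraph (Fin n)) :
    (editDist G H : ℝ) ≤
      prob (fun x : Fin n × Fin n => ¬(G.Adj x.1 x.2 ↔ H.Adj x.1 x.2)) * (n : ℝ) ^ 2 := by
  let differ : Finset (Fin n × Fin n) := {x | ¬(G.Adj x.1 x.2 ↔ H.Adj x.1 x.2)}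
  have hsub : {e : Sym2 (Fin n) |
      (e ∈ G.edgeSet ∧ e ∉ H.edgeSet) ∨ (e ∉ G.edgeSet ∧ e ∈ H.edgeSet)} ⊆
      differ.image fun x => s(x.1, x.2) := by
    intro e
    induction e with
    | _ u v =>
      intro he
      refine mem_coe.2 (mem_image.2 ⟨(u, v), mem_filter.2 ⟨mem_univ _, ?_⟩, rfl⟩)
      simp only [Set.mem_ofPred_eq, SimpleGraph.mem_edgeSet] at he
      tauto
  have hcard : editDist G H ≤ #differ :=
    (Set.ncard_le_ncard hsub).trans <| (Set.ncard_coe_finset _).trans_le card_image_le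
  rw [prob_eq_card_div_card, Fintype.card_prod, Fintype.card_fin]
  rcases n.eq_zero_or_pos with rfl | hn
  · simpa [eq_empty_of_isEmpty differ] using hcard
  · rw [Nat.cast_mul, ← sq, div_mul_cancel₀ _ (by positivity)]
    exact_mod_cast hcard

/-- The density of the pairs on which `G` may differ from a blowup of the graph it induces on the
range of `φ`, where `φ` sends each vertex to the representative of its part. -/
def blowupError {V : Type*} [Fintype V] (G : SimpleGraph V) (φ : V → V) : ℝ :=
  prob fun x : V × V => φ x.1 = φ x.2 ∨ ¬(G.Adj x.1 x.2 ↔ G.Adj (φ x.1) (φ x.2))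

theorem Far.le_blowupError {𝓕 : Set (Σ k : ℕ, SimpleGraph (Fin k))}
    (hblow : BlowupQuality (InducedFree 𝓕)) {n : ℕ} {G : SimpleGraph (Fin n)} {ε : ℝ}
    (hn : 0 < n) (hG : Far (InducedFree 𝓕) G ε) {φ : Fin n → Fin n}
    (hφ : ¬ContainsMember 𝓕 G (Set.range φ)) : ε ≤ blowupError G φ := by
  obtain ⟨H, hH, hadj⟩ := exists_mem_inducedFree_adj_iff hblow hφ
  have hle := (hG H hH).trans (editDist_le_prob_mul_sq G H)
  refine (le_of_mul_le_mul_right hle (by positivity)).trans (prob_mono fun x hx => ?_)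
  by_cases h : φ x.1 = φ x.2
  · exact .inl h
  · exact .inr (by rwa [← hadj _ _ h])

end Blowup

section Labelling

variable {V : Type*} [Fintype V] {δ η : ℝ}

theorem exists_card_mul_le_one_and_nbrDist_le (G : SimpleGraph V) (hδ : 0 ≤ δ) :
    ∃ S : Finset V, #S * η ≤ 1 ∧
      ∀ v, ¬IsNbrIsolated G δ η v → ∃ s ∈ S, nbrDist G v s ≤ 2 * δ := by
  let IsPacking (S : Finset V) : Prop := (∀ s ∈ S, ¬IsNbrIsolated G δ η s) ∧
    (S : Set V).Pairwise fun s t => 2 * δ < nbrDist G s t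
  obtain ⟨S, hS, hmax⟩ := exists_max_image ({S | IsPacking S} : Finset (Finset V)) card
    ⟨∅, by simp [IsPacking]⟩
  obtain ⟨hiso, hfar⟩ := (mem_filter.1 hS).2
  refine ⟨S, ?_, fun v hv => ?_⟩
  · have hball (w : V) : ∑ s ∈ S, (if nbrDist G s w ≤ δ then (1 : ℝ) else 0) ≤ 1 := by
      rw [sum_boole]
      exact_mod_cast card_le_one.2 fun s hs t ht => by
        by_contra hst
        have h := hfar (mem_filter.1 hs).1 (mem_filter.1 ht).1 hst
        linarith [nbrDist_triangle G s w t, nbrDist_comm G w t, (mem_filter.1 hs).2,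
          (mem_filter.1 ht).2]
    calc #S * η ≤ ∑ s ∈ S, prob fun w => nbrDist G s w ≤ δ := by
          simpa using card_nsmul_le_sum S _ η fun s hs => not_lt.1 (hiso s hs)
      _ = 𝔼 w, ∑ s ∈ S, if nbrDist G s w ≤ δ then 1 else 0 := (expect_sum_comm _ _ _).symm
      _ ≤ 1 := expect_le_of_forall_le zero_le_one hball
  · by_contra! hfar_v
    have hvS : v ∉ S := fun h => by
      have := hfar_v v h
      rw [nbrDist_self] at this
      linarith
    have hinsert : IsPacking (insert v S) := by
      refine ⟨(forall_mem_insert _ _ _).2 ⟨hv, hiso⟩, ?_⟩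
      rw [coe_insert, Set.pairwise_insert]
      exact ⟨hfar, fun s hs _ => ⟨hfar_v s hs, nbrDist_comm G v s ▸ hfar_v s hs⟩⟩
    have := hmax _ (mem_filter.2 ⟨mem_univ _, hinsert⟩)
    rw [card_insert_of_notMem hvS] at this
    omega

theorem exists_prob_eq_le {z : ℕ} (hz : 0 < z) (hzV : z ≤ Fintype.card V) :
    ∃ c : V → Fin z, ∀ u, prob (fun v => c u = c v) ≤ 2 / z := by
  let e := Fintype.equivFin V
  refine ⟨fun v => ⟨e v % z, Nat.mod_lt _ hz⟩, fun u => ?_⟩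
  have hcard : #{v | (e u % z : ℕ) = e v % z} ≤ Fintype.card V / z + 1 := by
    rw [← card_range (_ + 1)]
    refine card_le_card_of_injOn (fun v => e v / z) (fun v _ => ?_) fun v hv w hw hvw => ?_
    · exact mem_coe.2 (mem_range_succ_iff.2 (Nat.div_le_div_right (e v).2.le))
    · have hmod := (mem_filter.1 hv).2.symm.trans (mem_filter.1 hw).2
      refine e.injective (Fin.ext ?_)
      rw [← Nat.div_add_mod (e v) z, ← Nat.div_add_mod (e w) z, hmod]
      exact congrArg (z * · + _) hvw
  have hV : (0 : ℝ) < Fintype.card V := by exact_mod_cast hz.trans_le hzV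
  have hz' : (0 : ℝ) < z := by exact_mod_cast hz
  simp only [Fin.mk.injEq]
  rw [prob_eq_card_div_card, div_le_div_iff₀ hV hz']
  calc (#{v | (e u % z : ℕ) = e v % z} : ℝ) * z ≤ (Fintype.card V / z + 1 : ℕ) * z := by gcongr
    _ = ((Fintype.card V / z * z : ℕ) : ℝ) + z := by push_cast; ring
    _ ≤ Fintype.card V + Fintype.card V := by
      gcongr
      exact Nat.div_mul_le_self _ _
    _ = 2 * Fintype.card V := by ring

theorem exists_labelling (G : SimpleGraph V) (hδ : 0 ≤ δ) (hη : 0 < η) {z : ℕ} (hz : 0 < z)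
    (hzV : z ≤ Fintype.card V) :
    ∃ (m : ℕ) (c : V → Fin m), (m : ℝ) ≤ (η⁻¹ + 1) * z ∧
      (∀ u, prob (fun v => c u = c v) ≤ 2 / z) ∧
      ∀ u v, ¬IsNbrIsolated G δ η u → ¬IsNbrIsolated G δ η v → c u = c v →
        nbrDist G u v ≤ 4 * δ := by
  obtain ⟨S, hS, hnet⟩ := exists_card_mul_le_one_and_nbrDist_le (η := η) G hδ
  obtain ⟨c₁, hc₁⟩ := exists_prob_eq_le hz hzV
  have hcentre (v : V) : ∃ o : Option S, ¬IsNbrIsolated G δ η v →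
      ∃ s, o = some s ∧ nbrDist G v s ≤ 2 * δ := by
    by_cases hv : IsNbrIsolated G δ η v
    · exact ⟨none, fun h => (h hv).elim⟩
    · obtain ⟨s, hs, hvs⟩ := hnet v hv
      exact ⟨some ⟨s, hs⟩, fun _ => ⟨_, rfl, hvs⟩⟩
  choose c₂ hc₂ using hcentre
  refine ⟨_, fun v => Fintype.equivFin (Option S × Fin z) (c₂ v, c₁ v), ?_, fun u => ?_,
    fun u v hu hv huv => ?_⟩
  · rw [Fintype.card_prod, Fintype.card_option, Fintype.card_coe, Fintype.card_fin]
    push_cast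
    gcongr
    rwa [← one_div, le_div_iff₀ hη]
  · exact (prob_mono fun v huv => congrArg Prod.snd ((Equiv.injective _) huv)).trans (hc₁ u)
  · have h₂ : c₂ u = c₂ v := congrArg Prod.fst ((Equiv.injective _) huv)
    obtain ⟨s, hs, hus⟩ := hc₂ u hu
    obtain ⟨t, ht, hvt⟩ := hc₂ v hv
    obtain rfl : s = t := Option.some_injective _ (hs.symm.trans (h₂.trans ht))
    linarith [nbrDist_triangle G u s v, nbrDist_comm G s v]

end Labelling

section RandomRepresentatives

variable {V ι L : Type*} [Nonempty ι] {c : V → L} {f : ι → V} {u v : V}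

/-- A vertex of the sample `f` with the same label as `v`, the same one for all vertices with this
label: the classes of the labelling are the parts of a blowup of the sampled graph. If there is no
such vertex, it is an arbitrary vertex of the sample. -/
def sampleRep (c : V → L) (f : ι → V) (v : V) : V := f (Function.invFun (c ∘ f) (c v))

theorem sampleRep_label_eq_iff : c (sampleRep c f v) = c v ↔ ∃ i, c (f i) = c v :=
  ⟨fun h => ⟨_, h⟩, fun h => Function.invFun_eq (f := c ∘ f) h⟩

theorem range_sampleRep_subset (c : V → L) (f : ι → V) :
    Set.range (sampleRep c f) ⊆ Set.range f := by
  rintro _ ⟨v, rfl⟩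
  exact ⟨_, rfl⟩

/-- `v` is well represented by the sample `f`: its representative has the same label and almost the
same neighbourhood. -/
def IsRepresented [Fintype V] (G : SimpleGraph V) (c : V → L) (r : ℝ) (f : ι → V) (v : V) : Prop :=
  c (sampleRep c f v) = c v ∧ nbrDist G v (sampleRep c f v) ≤ r

theorem IsRepresented.label_eq_or_not_adj_iff [Fintype V] {G : SimpleGraph V} {r : ℝ}
    (hu : IsRepresented G c r f u) (hv : IsRepresented G c r f v)
    (h : sampleRep c f u = sampleRep c f v ∨
      ¬(G.Adj u v ↔ G.Adj (sampleRep c f u) (sampleRep c f v))) :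
    c u = c v ∨ ¬(G.Adj u v ↔ G.Adj (sampleRep c f u) v) ∨
      c u ≠ c v ∧ ¬(G.Adj (sampleRep c f u) v ↔ G.Adj (sampleRep c f u) (sampleRep c f v)) := by
  rcases h with heq | hadj
  · exact .inl (hu.1.symm.trans ((congrArg c heq).trans hv.1))
  · tauto

variable [DecidableEq ι]

/-- Exchange a vertex with its representative in the sample. On the pairs whose vertex has a
representative with its own label, this preserves the labels of the sample and is an involution,
and so it preserves probabilities there. -/
def swapRep (c : V → L) (x : (ι → V) × V) : (ι → V) × V :=
  (Function.update x.1 (Function.invFun (c ∘ x.1) (c x.2)) x.2, sampleRep c x.1 x.2)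

theorem comp_swapRep_fst (h : c (sampleRep c f v) = c v) : c ∘ (swapRep c (f, v)).1 = c ∘ f := by
  ext i
  rcases eq_or_ne i (Function.invFun (c ∘ f) (c v)) with rfl | hi
  · simpa [swapRep, sampleRep] using h.symm
  · simp [swapRep, hi]

theorem swapRep_swapRep (h : c (sampleRep c f v) = c v) :
    swapRep c (swapRep c (f, v)) = (f, v) := by
  have hcomp := comp_swapRep_fst h
  simp only [swapRep, sampleRep] at h hcomp ⊢
  simp [hcomp, h]

theorem sampleRep_swapRep (hu : c (sampleRep c f u) = c u) (hv : c (sampleRep c f v) = c v)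
    (huv : c u ≠ c v) : sampleRep c (swapRep c (f, u)).1 v = sampleRep c f v := by
  rw [sampleRep, comp_swapRep_fst hu]
  refine Function.update_of_ne (fun h => huv ?_) _ _
  rw [← hu, ← hv, sampleRep, sampleRep, h]

variable [Fintype V] [Fintype ι] {G : SimpleGraph V} {δ η : ℝ}

theorem prob_swapRep_le (c : V → L) (q : (ι → V) × V → Prop) :
    prob (fun x => c (sampleRep c x.1 x.2) = c x.2 ∧ q (swapRep c x)) ≤ prob q :=
  prob_le_of_injOn (fun _ h => h.2) fun x hx y hy hxy => by
    rw [← Prod.mk.eta (p := x), ← swapRep_swapRep hx.1, ← Prod.mk.eta (p := y),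
      ← swapRep_swapRep hy.1, Prod.mk.eta, Prod.mk.eta, hxy]

theorem prob_forall_ne_le [Fintype L] (c : V → L) :
    prob (fun x : (ι → V) × V => ∀ i, c (x.1 i) ≠ c x.2) ≤
      Fintype.card L / Fintype.card ι := by
  have hι : (0 : ℝ) < Fintype.card ι := by exact_mod_cast Fintype.card_pos
  have hlabel (a : L) : prob (fun x : (ι → V) × V => (∀ i, ¬c (x.1 i) = a) ∧ c x.2 = a) ≤
      1 / Fintype.card ι := by
    rw [prob_prod_and (fun f : ι → V => ∀ i, ¬c (f i) = a) fun v => c v = a, le_div_iff₀ hι]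
    set r := prob fun v => c v = a
    calc prob (fun f : ι → V => ∀ i, ¬c (f i) = a) * r * Fintype.card ι
        ≤ Real.exp (-(Fintype.card ι * r)) * r * Fintype.card ι := by
          gcongr
          · exact prob_nonneg
          · exact prob_forall_not_le_exp fun v => c v = a
      _ = Fintype.card ι * r * Real.exp (-(Fintype.card ι * r)) := by ring
      _ ≤ Real.exp (Fintype.card ι * r) * Real.exp (-(Fintype.card ι * r)) := by
          gcongr
          linarith [Real.add_one_le_exp (Fintype.card ι * r)]
      _ = 1 := by rw [← Real.exp_add, add_neg_cancel, Real.exp_zero]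
  calc prob (fun x : (ι → V) × V => ∀ i, c (x.1 i) ≠ c x.2)
      ≤ prob fun x : (ι → V) × V => ∃ a ∈ univ, (∀ i, ¬c (x.1 i) = a) ∧ c x.2 = a :=
        prob_mono fun x hx => ⟨c x.2, mem_univ _, hx, rfl⟩
    _ ≤ ∑ a : L, prob fun x : (ι → V) × V => (∀ i, ¬c (x.1 i) = a) ∧ c x.2 = a :=
        prob_exists_le _ _
    _ ≤ ∑ _ : L, 1 / (Fintype.card ι : ℝ) := sum_le_sum fun a _ => hlabel a
    _ = Fintype.card L / Fintype.card ι := by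
        rw [sum_const, card_univ, nsmul_eq_mul, mul_one_div]

theorem prob_not_isRepresented_le [Fintype L] {r : ℝ} (hL : Fintype.card L ≤ δ * Fintype.card ι)
    (hiso : prob (IsNbrIsolated G δ η) ≤ δ)
    (hc : ∀ u v, ¬IsNbrIsolated G δ η u → ¬IsNbrIsolated G δ η v → c u = c v →
      nbrDist G u v ≤ r) :
    prob (fun x : (ι → V) × V => ¬IsRepresented G c r x.1 x.2) ≤ 3 * δ := by
  have hι : (0 : ℝ) < Fintype.card ι := by exact_mod_cast Fintype.card_pos
  have hδ : 0 ≤ δ := prob_nonneg.trans hiso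
  have hmiss := (prob_forall_ne_le (ι := ι) c).trans ((div_le_iff₀ hι).2 hL)
  have hvertex : prob (fun x : (ι → V) × V => IsNbrIsolated G δ η x.2) ≤ δ :=
    prob_le_of_forall_fiber hδ (Equiv.refl _) fun _ => hiso
  have hrep := (prob_swapRep_le c fun x : (ι → V) × V => IsNbrIsolated G δ η x.2).trans hvertex
  calc prob (fun x : (ι → V) × V => ¬IsRepresented G c r x.1 x.2)
      ≤ prob fun x : (ι → V) × V => (∀ i, c (x.1 i) ≠ c x.2) ∨ IsNbrIsolated G δ η x.2 ∨
          (c (sampleRep c x.1 x.2) = c x.2 ∧ IsNbrIsolated G δ η (swapRep c x).2) := by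
        refine prob_mono fun x hx => ?_
        by_contra! h
        have hhit := sampleRep_label_eq_iff.2 h.1
        exact hx ⟨hhit, hc _ _ h.2.1 (h.2.2 hhit) hhit.symm⟩
    _ ≤ δ + (δ + δ) := prob_or_le.trans (add_le_add hmiss (prob_or_le.trans
        (add_le_add hvertex hrep)))
    _ = 3 * δ := by ring

theorem prob_isRepresented_and_adj_le {r : ℝ} (hr : 0 ≤ r) :
    prob (fun x : (ι → V) × (V × V) => IsRepresented G c r x.1 x.2.1 ∧
      ¬(G.Adj x.2.1 x.2.2 ↔ G.Adj (sampleRep c x.1 x.2.1) x.2.2)) ≤ r := by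
  refine prob_le_of_forall_fiber hr (Equiv.prodAssoc _ _ _).symm fun x => ?_
  by_cases hx : IsRepresented G c r x.1 x.2
  · exact (prob_mono fun v hv => hv.2).trans hx.2
  · simpa [prob, hx] using hr

theorem prob_isRepresented_and_adj_sampleRep_le {r : ℝ} (hr : 0 ≤ r) :
    prob (fun x : (ι → V) × (V × V) => IsRepresented G c r x.1 x.2.1 ∧
      IsRepresented G c r x.1 x.2.2 ∧ c x.2.1 ≠ c x.2.2 ∧
      ¬(G.Adj (sampleRep c x.1 x.2.1) x.2.2 ↔
        G.Adj (sampleRep c x.1 x.2.1) (sampleRep c x.1 x.2.2))) ≤ r := by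
  let e : (ι → V) × (V × V) ≃ V × ((ι → V) × V) :=
    (Equiv.prodAssoc _ _ _).symm.trans (Equiv.prodComm _ _)
  refine prob_le_of_forall_fiber hr e fun v => ?_
  let q (x : (ι → V) × V) : Prop := IsRepresented G c r x.1 v ∧
    ¬(G.Adj v x.2 ↔ G.Adj (sampleRep c x.1 v) x.2)
  have hq : prob q ≤ r := by
    refine prob_le_of_forall_fiber hr (Equiv.refl _) fun f => ?_
    by_cases hf : IsRepresented G c r f v
    · exact (prob_mono fun u hu => hu.2).trans hf.2
    · simpa [prob, q, hf] using hr
  refine (prob_mono fun x hx => ?_).trans ((prob_swapRep_le c q).trans hq)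
  obtain ⟨hu, hv, huv, hadj⟩ := hx
  have hrep : sampleRep c (swapRep c x).1 v = sampleRep c x.1 v :=
    sampleRep_swapRep hu.1 hv.1 huv
  refine ⟨hu.1, ?_, ?_⟩
  · rwa [IsRepresented, hrep]
  · rw [hrep, G.adj_comm, G.adj_comm (sampleRep c x.1 v)]
    exact hadj

theorem expect_blowupError_sampleRep_le [Fintype L]
    (hL : Fintype.card L ≤ δ * Fintype.card ι) (hiso : prob (IsNbrIsolated G δ η) ≤ δ)
    (hclass : ∀ u, prob (fun v => c u = c v) ≤ 2 * δ)
    (hc : ∀ u v, ¬IsNbrIsolated G δ η u → ¬IsNbrIsolated G δ η v → c u = c v →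
      nbrDist G u v ≤ 4 * δ) :
    𝔼 f : ι → V, blowupError G (sampleRep c f) ≤ 16 * δ := by
  have hδ : 0 ≤ δ := prob_nonneg.trans hiso
  let bad (f : ι → V) (v : V) : Prop := ¬IsRepresented G c (4 * δ) f v
  have hbad : prob (fun x : (ι → V) × V => bad x.1 x.2) ≤ 3 * δ :=
    prob_not_isRepresented_le hL hiso hc
  have hbad_fst : prob (fun x : (ι → V) × (V × V) => bad x.1 x.2.1) ≤ 3 * δ :=
    prob_le_of_forall_fiber (by positivity)
      ((Equiv.prodAssoc _ _ _).symm.trans (Equiv.prodComm _ _)) fun _ => hbad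
  have hbad_snd : prob (fun x : (ι → V) × (V × V) => bad x.1 x.2.2) ≤ 3 * δ :=
    (prob_comp_equiv ((Equiv.refl _).prodCongr (Equiv.prodComm _ _))
      fun x : (ι → V) × (V × V) => bad x.1 x.2.1).trans_le hbad_fst
  have hsame : prob (fun x : (ι → V) × (V × V) => c x.2.1 = c x.2.2) ≤ 2 * δ :=
    prob_le_of_forall_fiber (by positivity) (Equiv.prodAssoc _ _ _).symm fun x => hclass x.2
  let err (x : (ι → V) × (V × V)) : Prop := sampleRep c x.1 x.2.1 = sampleRep c x.1 x.2.2 ∨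
    ¬(G.Adj x.2.1 x.2.2 ↔ G.Adj (sampleRep c x.1 x.2.1) (sampleRep c x.1 x.2.2))
  let errFst (x : (ι → V) × (V × V)) : Prop := IsRepresented G c (4 * δ) x.1 x.2.1 ∧
    ¬(G.Adj x.2.1 x.2.2 ↔ G.Adj (sampleRep c x.1 x.2.1) x.2.2)
  let errSnd (x : (ι → V) × (V × V)) : Prop := IsRepresented G c (4 * δ) x.1 x.2.1 ∧
    IsRepresented G c (4 * δ) x.1 x.2.2 ∧ c x.2.1 ≠ c x.2.2 ∧
    ¬(G.Adj (sampleRep c x.1 x.2.1) x.2.2 ↔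
      G.Adj (sampleRep c x.1 x.2.1) (sampleRep c x.1 x.2.2))
  have hfst : prob errFst ≤ 4 * δ := prob_isRepresented_and_adj_le (by positivity)
  have hsnd : prob errSnd ≤ 4 * δ := prob_isRepresented_and_adj_sampleRep_le (by positivity)
  calc 𝔼 f : ι → V, blowupError G (sampleRep c f) = prob err := (prob_prod err).symm
    _ ≤ prob fun x : (ι → V) × (V × V) => bad x.1 x.2.1 ∨ bad x.1 x.2.2 ∨ c x.2.1 = c x.2.2 ∨
          errFst x ∨ errSnd x := by
        refine prob_mono fun x hx => ?_
        by_cases hu : bad x.1 x.2.1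
        · exact .inl hu
        by_cases hv : bad x.1 x.2.2
        · exact .inr (.inl hv)
        have hu := not_not.1 hu
        have hv := not_not.1 hv
        rcases hu.label_eq_or_not_adj_iff hv hx with h | h | h
        · exact .inr (.inr (.inl h))
        · exact .inr (.inr (.inr (.inl ⟨hu, h⟩)))
        · exact .inr (.inr (.inr (.inr ⟨hu, hv, h⟩)))
    _ ≤ 3 * δ + (3 * δ + (2 * δ + (4 * δ + 4 * δ))) :=
        prob_or_le.trans <| add_le_add hbad_fst <| prob_or_le.trans <| add_le_add hbad_snd <|
          prob_or_le.trans <| add_le_add hsame <| prob_or_le.trans <| add_le_add hfst hsnd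
    _ = 16 * δ := by ring

theorem prob_not_containsMember_le {𝓕 : Set (Σ k : ℕ, SimpleGraph (Fin k))}
    (hblow : BlowupQuality (InducedFree 𝓕)) {n z : ℕ} {G : SimpleGraph (Fin n)} {ε η : ℝ}
    (hG : Far (InducedFree 𝓕) G ε) (hz : 0 < z) (hzn : z ≤ n) (hη : 0 < η)
    (hι : (η⁻¹ + 1) * (z : ℝ) ^ 2 ≤ Fintype.card ι) (hε : 48 ≤ ε * z)
    (hiso : prob (IsNbrIsolated G (z : ℝ)⁻¹ η) ≤ (z : ℝ)⁻¹) :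
    prob (fun f : ι → Fin n => ¬ContainsMember 𝓕 G (Set.range f)) ≤ 1 / 3 := by
  have hz' : (0 : ℝ) < z := by exact_mod_cast hz
  obtain ⟨m, c, hm, hclass, hc⟩ :=
    exists_labelling G (inv_nonneg.2 hz'.le) hη hz (hzn.trans_eq (Fintype.card_fin n).symm)
  have hmι : (Fintype.card (Fin m) : ℝ) ≤ (z : ℝ)⁻¹ * Fintype.card ι := by
    rw [Fintype.card_fin, inv_mul_eq_div, le_div_iff₀ hz']
    calc m * (z : ℝ) ≤ (η⁻¹ + 1) * z * z := by gcongr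
      _ ≤ Fintype.card ι := by rwa [mul_assoc, ← sq]
  have hfar (f : ι → Fin n) (hf : ¬ContainsMember 𝓕 G (Set.range f)) :
      ε ≤ blowupError G (sampleRep c f) :=
    hG.le_blowupError hblow (hz.trans_le hzn) fun h =>
      hf (monotone_containsMember _ _ (range_sampleRep_subset c f) h)
  have hε0 : 0 < ε := pos_of_mul_pos_left (by linarith) hz'.le
  have hexpect : ε * prob (fun f : ι → Fin n => ¬ContainsMember 𝓕 G (Set.range f)) ≤
      16 * (z : ℝ)⁻¹ := by
    calc ε * prob (fun f : ι → Fin n => ¬ContainsMember 𝓕 G (Set.range f))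
        ≤ ε * prob fun f : ι → Fin n => ε ≤ blowupError G (sampleRep c f) := by
          gcongr
          exact prob_mono hfar
      _ ≤ 𝔼 f : ι → Fin n, blowupError G (sampleRep c f) :=
          mul_prob_le_expect fun f => prob_nonneg
      _ ≤ 16 * (z : ℝ)⁻¹ := expect_blowupError_sampleRep_le hmι hiso hclass hc
  refine le_of_mul_le_mul_left (hexpect.trans ?_) hε0
  rw [← div_eq_mul_inv, div_le_iff₀ hz']
  linarith

end RandomRepresentatives

section Parameters

theorem exists_forall_mul_pow_le_exp (C : ℝ) (d : ℕ) :
    ∃ z₀ : ℕ, ∀ z : ℕ, z₀ ≤ z → C * (z : ℝ) ^ d ≤ Real.exp z := by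
  have hlim := (Real.tendsto_exp_div_pow_atTop d).comp tendsto_natCast_atTop_atTop
  obtain ⟨z₀, hz₀⟩ := Filter.eventually_atTop.1
    ((hlim.eventually_ge_atTop C).and (Filter.eventually_gt_atTop 0))
  refine ⟨z₀, fun z hz => ?_⟩
  have hpos : (0 : ℝ) < z := by exact_mod_cast (hz₀ z hz).2
  exact (le_div_iff₀ (by positivity)).1 (hz₀ z hz).1

theorem exists_rpow_neg_bound (d B C z₀ : ℕ) : ∃ c : ℝ, 0 < c ∧ ∀ ε : ℝ, 0 < ε → ε < 1 / 2 →
    ∃ z : ℕ, z₀ ≤ z ∧ B ≤ ε * z ∧ C * (z : ℝ) ^ d ≤ ε ^ (-c) := by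
  let Z := B + z₀ + 1
  let K := C * (2 * Z) ^ d + 1
  refine ⟨(d + K : ℕ), by positivity, fun ε hε hε₂ => ⟨⌈Z / ε⌉₊, ?_, ?_, ?_⟩⟩
  · have : (z₀ : ℝ) ≤ Z / ε := by
      rw [le_div_iff₀ hε]
      calc z₀ * ε ≤ z₀ * 1 := by gcongr; linarith
        _ ≤ Z := by push_cast [Z]; linarith [(Nat.cast_nonneg B : (0 : ℝ) ≤ B)]
    exact_mod_cast this.trans (Nat.le_ceil _)
  · calc (B : ℝ) ≤ Z := by exact_mod_cast (by omega : B ≤ Z)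
      _ = ε * (Z / ε) := (mul_div_cancel₀ _ hε.ne').symm
      _ ≤ ε * ⌈Z / ε⌉₊ := by gcongr; exact Nat.le_ceil _
  · have hceil : (⌈Z / ε⌉₊ : ℝ) ≤ 2 * Z * ε⁻¹ := by
      have hone : 1 ≤ Z / ε := by
        rw [one_le_div hε]
        push_cast [Z]
        linarith [(Nat.cast_nonneg B : (0 : ℝ) ≤ B), (Nat.cast_nonneg z₀ : (0 : ℝ) ≤ z₀)]
      calc (⌈Z / ε⌉₊ : ℝ) ≤ Z / ε + 1 := (Nat.ceil_lt_add_one (by positivity)).le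
        _ ≤ Z / ε + Z / ε := by gcongr
        _ = 2 * Z * ε⁻¹ := by ring
    have htwo : 2 ≤ ε⁻¹ := by
      rw [← one_div, le_div_iff₀ hε]
      linarith
    calc C * (⌈Z / ε⌉₊ : ℝ) ^ d ≤ C * (2 * Z * ε⁻¹) ^ d := by gcongr
      _ = (C * (2 * Z) ^ d : ℕ) * ε⁻¹ ^ d := by push_cast; ring
      _ ≤ (2 ^ K : ℕ) * ε⁻¹ ^ d := by
          gcongr
          exact (Nat.le_succ _).trans Nat.lt_two_pow_self.le
      _ ≤ ε⁻¹ ^ K * ε⁻¹ ^ d := by push_cast; gcongr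
      _ = ε ^ (-((d + K : ℕ) : ℝ)) := by
          rw [← pow_add, Real.rpow_neg hε.le, Real.rpow_natCast, inv_pow, add_comm]

end Parameters

section Testing

variable {𝓕 : Set (Σ k : ℕ, SimpleGraph (Fin k))}

theorem two_thirds_mul_card_powersetCard_le {ι : Type*} [Fintype ι] [DecidableEq ι] {n q : ℕ}
    {G : SimpleGraph (Fin n)} (hι : Fintype.card ι ≤ q) (hq : q ≤ n)
    (h : prob (fun f : ι → Fin n => ¬ContainsMember 𝓕 G (Set.range f)) ≤ 1 / 3) :
    (2 / 3 : ℝ) * #(powersetCard q (univ : Finset (Fin n))) ≤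
      #{Q ∈ powersetCard q univ | ∃ hQ : #Q = q, inducedOn G Q hQ ∉ InducedFree 𝓕 q} := by
  obtain ⟨f₀⟩ := Function.Embedding.nonempty_of_card_le (β := Fin n)
    ((hι.trans hq).trans_eq (Fintype.card_fin n).symm)
  have : Nonempty (ι → Fin n) := ⟨f₀⟩
  have hpos : (0 : ℝ) < #(powersetCard q (univ : Finset (Fin n))) := by
    rw [card_powersetCard, card_univ, Fintype.card_fin]
    exact_mod_cast Nat.choose_pos hq
  have hfilter : {Q ∈ powersetCard q (univ : Finset (Fin n)) |
        ∃ hQ : #Q = q, inducedOn G Q hQ ∉ InducedFree 𝓕 q} =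
      (powersetCard q univ).filter fun Q : Finset (Fin n) => ContainsMember 𝓕 G (Q : Set (Fin n)) :=
    filter_congr fun Q hQ =>
      ⟨fun ⟨hQ, h⟩ => (inducedOn_notMem_inducedFree_iff hQ).1 h,
        fun h => ⟨_, (inducedOn_notMem_inducedFree_iff (mem_powersetCard.1 hQ).2).2 h⟩⟩
  rw [hfilter, ← le_div_iff₀ hpos,
    ← prob_powersetCard fun Q : Finset (Fin n) => ContainsMember 𝓕 G (Q : Set (Fin n))]
  refine le_trans ?_ (prob_range_le_prob_powersetCard hι (hq.trans_eq (Fintype.card_fin n).symm)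
    (monotone_containsMember 𝓕 G))
  linarith [prob_add_prob_not (p := fun f : ι → Fin n => ContainsMember 𝓕 G (Set.range f))]

theorem exists_forall_two_thirds_mul_card_powersetCard_le
    (hbip : ∃ p ∈ 𝓕, IsBipGraph p.2) (hcobip : ∃ p ∈ 𝓕, IsCoBipGraph p.2)
    (hsplit : ∃ p ∈ 𝓕, IsSplitGraph p.2) (hblow : BlowupQuality (InducedFree 𝓕)) :
    ∃ d z₀ : ℕ, ∀ {ε : ℝ} {z q n : ℕ} {G : SimpleGraph (Fin n)}, z₀ ≤ z → 48 ≤ ε * z →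
      10 * z ^ d ≤ q → q ≤ n → Far (InducedFree 𝓕) G ε →
      (2 / 3 : ℝ) * #(powersetCard q (univ : Finset (Fin n))) ≤
        #{Q ∈ powersetCard q univ | ∃ hQ : #Q = q, inducedOn G Q hQ ∉ InducedFree 𝓕 q} := by
  obtain ⟨N, h𝓕⟩ := exists_bound_hasHomogeneousBipartition hbip hcobip hsplit
  obtain ⟨D, hmany⟩ := exists_forall_prob_not_containsMember_le h𝓕
  obtain ⟨z₀, hexp⟩ := exists_forall_mul_pow_le_exp 9 (4 * D + 4)
  refine ⟨4 * D + 6, max 2 z₀, fun {ε z q n G} hz hεz hzq hqn hG => ?_⟩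
  have hz₂ : 2 ≤ z := (le_max_left _ _).trans hz
  have hz₁ : 1 ≤ z := Nat.one_le_of_lt hz₂
  have hzq' : z ≤ q := by linarith [Nat.le_self_pow (by omega : 4 * D + 6 ≠ 0) z]
  rcases le_total (z : ℝ)⁻¹ (prob (IsNbrIsolated G (z : ℝ)⁻¹ (9 * (z : ℝ) ^ (4 * D + 4))⁻¹)) with
    hiso | hiso
  · refine two_thirds_mul_card_powersetCard_le (le_trans ?_ hzq) hqn
      (hmany G z hz₂ (hexp z ((le_max_right _ _).trans hz)) hiso)
    simp only [Fintype.card_sum, Fintype.card_prod, Fintype.card_fin]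
    calc z ^ (2 * D) * z ^ 2 + z ^ 2 ≤ z ^ (4 * D + 6) + z ^ (4 * D + 6) := by
          rw [← pow_add]
          gcongr <;> omega
      _ ≤ 10 * z ^ (4 * D + 6) := by omega
  · have : Nonempty (Fin q) := ⟨⟨0, hz₁.trans hzq'⟩⟩
    refine two_thirds_mul_card_powersetCard_le (Fintype.card_fin q).le hqn
      (prob_not_containsMember_le hblow hG hz₁ (hzq'.trans hqn) (by positivity) ?_ hεz hiso)
    have hone : (1 : ℝ) ≤ (z : ℝ) ^ (4 * D + 4) := one_le_pow₀ (by exact_mod_cast hz₁)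
    rw [inv_inv, Fintype.card_fin]
    calc (9 * (z : ℝ) ^ (4 * D + 4) + 1) * (z : ℝ) ^ 2
        ≤ (9 * (z : ℝ) ^ (4 * D + 4) + (z : ℝ) ^ (4 * D + 4)) * (z : ℝ) ^ 2 := by gcongr
      _ = 10 * (z : ℝ) ^ (4 * D + 6) := by ring
      _ ≤ q := by exact_mod_cast hzq

end Testing

/-- If `𝓕` contains a bipartite graph, a co-bipartite graph and a split graph,
and being induced `𝓕`-free has the blowup quality, then being induced `𝓕`-free is easily
testable. -/
theorem easily_testable_of_blowup_quality
    (𝓕 : Set (Σ k : ℕ, SimpleGraph (Fin k)))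
    (hbip : ∃ p ∈ 𝓕, IsBipGraph p.2)
    (hcobip : ∃ p ∈ 𝓕, IsCoBipGraph p.2)
    (hsplit : ∃ p ∈ 𝓕, IsSplitGraph p.2)
    (hblow : BlowupQuality (InducedFree 𝓕)) :
    EasilyTestable (InducedFree 𝓕) := by
  obtain ⟨d, z₀, htest⟩ :=
    exists_forall_two_thirds_mul_card_powersetCard_le hbip hcobip hsplit hblow
  obtain ⟨c, hc, hz⟩ := exists_rpow_neg_bound d 48 10 z₀
  refine ⟨c, hc, fun ε hε hε₂ n G hn hG => ?_⟩
  obtain ⟨z, hz₀, hεz, hzc⟩ := hz ε hε hε₂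
  exact htest hz₀ (by exact_mod_cast hεz) (by exact_mod_cast hzc.trans (Nat.le_ceil _))
    (Nat.ceil_le.2 hn) hG

end
end
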